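/- arXiv:math/0412400 — 2 statements merged into one kernel-verified Lean document; each statement's English description precedes it below -/
import Mathlib

section
/- Let g_1,…,g_m ∈ ℝ[x_1,…,x_n], V = {x ∈ ℝ^n : g_j(x) = 0 for j = 1,…,m}, and suppose f ∈ ℝ[x_1,…,x_n] has a global minimizer x* ∈ V on V with f(x*) = f*. Fix ε > 0. Then for all sufficiently large r (with 2r ≥ max(deg f, deg g_j^2)): f* ≤ sup𝒬*_{εr} ≤ inf𝒬_{εr} ≤ f* + ε·θ_r(x*) ≤ f* + ε·∑_{i=1}^n e^{(x*_i)²}, where inf𝒬_{εr} is the infimum of L_y(f + ε·θ_r) over all y : {α ∈ ℕ^n : |α| ≤ 2r} → ℝ with y_0 = 1, M_r(y) positive semidefinite, and L_y(g_j^2) ≤ 0 for all j, and sup𝒬*_{εr} is the supremum of γ over all γ ∈ ℝ, λ ∈ ℝ_+^m, and s.o.s. polynomials q of degree ≤ 2r satisfying f + ε·θ_r − γ = q − ∑_{j=1}^m λ_j·g_j^2. -/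
open MvPolynomial MeasureTheory Filter Topology

/-- `θ_r(x) = ∑_{k=0}^r ∑_{i=1}^n x_i^{2k}/k!` as a polynomial in `ℝ[x_1,…,x_n]`. -/
noncomputable def theta (n r : ℕ) : MvPolynomial (Fin n) ℝ :=
  ∑ k ∈ Finset.range (r + 1), ∑ i : Fin n,
    C ((1 : ℝ) / (Nat.factorial k : ℝ)) * X i ^ (2 * k)

/-- A polynomial is a sum of squares if it is a finite sum of squares of polynomials. -/
def IsSOS {n : ℕ} (p : MvPolynomial (Fin n) ℝ) : Prop :=
  ∃ (k : ℕ) (q : Fin k → MvPolynomial (Fin n) ℝ), p = ∑ i, q i ^ 2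

/-- The linear functional `L_y` sending `p = ∑_α p_α x^α` to `∑_α p_α y_α`. -/
noncomputable def Ly {n : ℕ} (y : (Fin n →₀ ℕ) → ℝ) (p : MvPolynomial (Fin n) ℝ) : ℝ :=
  ∑ α ∈ p.support, coeff α p * y α

/-- The finite set of multi-indices `α ∈ ℕ^n` with `|α| ≤ r`. -/
noncomputable def degLE (n r : ℕ) : Finset (Fin n →₀ ℕ) :=
  (Finset.Iic (Finsupp.equivFunOnFinite.symm fun _ : Fin n => r)).filter
    fun α => (α.sum fun _ e => e) ≤ r

/-- The moment matrix `M_r(y)`, indexed by multi-indices `|α| ≤ r`, `|β| ≤ r`, with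
entries `y_{α+β}`. -/
noncomputable def momentMatrix (n r : ℕ) (y : (Fin n →₀ ℕ) → ℝ) :
    Matrix ↥(degLE n r) ↥(degLE n r) ℝ :=
  fun α β => y (α.1 + β.1)

/-- The optimal value `inf 𝒬_{εr}` of the SDP relaxation. -/
noncomputable def infQ (n m : ℕ) (g : Fin m → MvPolynomial (Fin n) ℝ)
    (f : MvPolynomial (Fin n) ℝ) (ε : ℝ) (r : ℕ) : ℝ :=
  sInf {v | ∃ y : (Fin n →₀ ℕ) → ℝ, y 0 = 1 ∧ (momentMatrix n r y).PosSemidef ∧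
    (∀ j, Ly y ((g j) ^ 2) ≤ 0) ∧ v = Ly y (f + C ε * theta n r)}

/-- The optimal value `sup 𝒬*_{εr}` of the dual SDP. -/
noncomputable def supQdual (n m : ℕ) (g : Fin m → MvPolynomial (Fin n) ℝ)
    (f : MvPolynomial (Fin n) ℝ) (ε : ℝ) (r : ℕ) : ℝ :=
  sSup {v | ∃ (γ : ℝ) (lam : Fin m → ℝ) (q : MvPolynomial (Fin n) ℝ),
    (∀ j, 0 ≤ lam j) ∧ IsSOS q ∧ q.totalDegree ≤ 2 * r ∧
    f + C ε * theta n r - C γ = q - ∑ j, C (lam j) * g j ^ 2 ∧ v = γ}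


namespace LSR

/-- Coefficient bound of exponential type. -/
def EB {n : ℕ} (A c : ℝ) (a : MvPowerSeries (Fin n) ℝ) : Prop :=
  ∀ α, |MvPowerSeries.coeff α a| ≤ A * c ^ α.degree / (α.degree.factorial : ℝ)

theorem EB.mono {n : ℕ} {A c A' c' : ℝ} {a : MvPowerSeries (Fin n) ℝ} (h : EB A c a)
    (hA : A ≤ A') (hc0 : 0 ≤ c) (hA0 : 0 ≤ A') (hc : c ≤ c') : EB A' c' a := by
  intro α
  refine (h α).trans ?_
  gcongr

theorem card_antidiagonal_le {n : ℕ} (α : Fin n →₀ ℕ) :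
    (Finset.HasAntidiagonal.antidiagonal α).card ≤ 2 ^ α.degree := by
  have h1 : (Finset.HasAntidiagonal.antidiagonal α).card ≤ (Finset.Iic α).card := by
    refine Finset.card_le_card_of_injOn Prod.fst ?_ ?_
    · intro x hx
      simp only [Finset.coe_Iic, Set.mem_Iic, Finset.mem_coe, Finset.HasAntidiagonal.mem_antidiagonal] at hx ⊢
      rw [← hx]; exact le_self_add
    · intro x hx y hy hxy
      simp only [Finset.mem_coe, Finset.HasAntidiagonal.mem_antidiagonal] at hx hy
      have : x.2 = y.2 := by
        have h := hx.trans hy.symm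
        rw [hxy] at h
        exact add_left_cancel h
      exact Prod.ext hxy this
  refine h1.trans ?_
  rw [Finsupp.card_Iic, Finsupp.degree_apply, ← Finset.prod_pow_eq_pow_sum]
  refine Finset.prod_le_prod' fun i _ => ?_
  rw [Nat.card_Iic]
  exact Nat.lt_two_pow_self

theorem inv_fact_le (j k : ℕ) :
    (1 : ℝ) / (j.factorial : ℝ) * (1 / (k.factorial : ℝ)) ≤ 2 ^ (j + k) / ((j + k).factorial : ℝ) := by
  have h1 : ((j + k).choose k : ℝ) ≤ 2 ^ (j + k) := by
    exact_mod_cast Nat.choose_le_two_pow _ _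
  have h2 : ((j + k).choose k : ℝ) * j.factorial * k.factorial = (j + k).factorial := by
    exact_mod_cast Nat.add_choose_mul_factorial_mul_factorial j k
  have hj : (0 : ℝ) < j.factorial := by exact_mod_cast Nat.factorial_pos j
  have hk : (0 : ℝ) < k.factorial := by exact_mod_cast Nat.factorial_pos k
  have hjk : (0 : ℝ) < (j + k).factorial := by exact_mod_cast Nat.factorial_pos (j + k)
  rw [div_mul_div_comm, div_le_div_iff₀ (by positivity) hjk, ← h2]
  have : 0 < (j.factorial : ℝ) * k.factorial := by positivity
  nlinarith

theorem EB.mul {n : ℕ} {A B c : ℝ} {a b : MvPowerSeries (Fin n) ℝ} (ha : EB A c a)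
    (hb : EB B c b) (hA : 0 ≤ A) (hB : 0 ≤ B) (hc : 0 ≤ c) : EB (A * B) (4 * c) (a * b) := by
  classical
  intro α
  rw [MvPowerSeries.coeff_mul]
  refine (Finset.abs_sum_le_sum_abs _ _).trans ?_
  have hterm : ∀ p ∈ Finset.HasAntidiagonal.antidiagonal α,
      |MvPowerSeries.coeff p.1 a * MvPowerSeries.coeff p.2 b| ≤
        A * B * c ^ α.degree * (2 ^ α.degree / (α.degree.factorial : ℝ)) := by
    intro p hp
    rw [Finset.HasAntidiagonal.mem_antidiagonal] at hp
    rw [← hp, map_add, abs_mul]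
    have h1 := ha p.1
    have h2 := hb p.2
    calc _ ≤ (A * c ^ p.1.degree / (p.1.degree.factorial : ℝ)) *
          (B * c ^ p.2.degree / (p.2.degree.factorial : ℝ)) := by gcongr
      _ = A * B * c ^ (p.1.degree + p.2.degree) *
          ((1 : ℝ) / (p.1.degree.factorial : ℝ) * (1 / (p.2.degree.factorial : ℝ))) := by
            rw [pow_add]; ring
      _ ≤ _ := by
        gcongr
        exact inv_fact_le _ _
  refine (Finset.sum_le_card_nsmul _ _ _ hterm).trans ?_
  rw [nsmul_eq_mul]
  have h3 : ((Finset.HasAntidiagonal.antidiagonal α).card : ℝ) ≤ 2 ^ α.degree := by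
    exact_mod_cast card_antidiagonal_le α
  calc _ ≤ (2 : ℝ) ^ α.degree * (A * B * c ^ α.degree * (2 ^ α.degree / (α.degree.factorial : ℝ))) := by
        gcongr
    _ = _ := by
      rw [mul_pow, show (4 : ℝ) = 2 * 2 by norm_num, mul_pow]; ring

/-- Dominated coefficientwise convergence. -/
def DC {n : ℕ} (u : ℕ → MvPowerSeries (Fin n) ℝ) (a : MvPowerSeries (Fin n) ℝ) : Prop :=
  (∃ A c : ℝ, 0 ≤ A ∧ 0 ≤ c ∧ ∀ k, EB A c (u k)) ∧
  ∀ α, Tendsto (fun k => MvPowerSeries.coeff α (u k)) atTop (𝓝 (MvPowerSeries.coeff α a))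

theorem DC.mul {n : ℕ} {u v : ℕ → MvPowerSeries (Fin n) ℝ} {a b : MvPowerSeries (Fin n) ℝ}
    (hu : DC u a) (hv : DC v b) : DC (fun k => u k * v k) (a * b) := by
  classical
  obtain ⟨⟨A, c, hA, hc, h1⟩, h2⟩ := hu
  obtain ⟨⟨B, d, hB, hd, h3⟩, h4⟩ := hv
  refine ⟨⟨A * B, 4 * max c d, by positivity, by positivity, fun k => ?_⟩, fun α => ?_⟩
  · exact ((h1 k).mono le_rfl hc hA (le_max_left _ _)).mul
      ((h3 k).mono le_rfl hd hB (le_max_right _ _)) hA hB (by positivity)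
  · simp only [MvPowerSeries.coeff_mul]
    exact tendsto_finsetSum _ fun p _ => (h2 p.1).mul (h4 p.2)

theorem DC.add {n : ℕ} {u v : ℕ → MvPowerSeries (Fin n) ℝ} {a b : MvPowerSeries (Fin n) ℝ}
    (hu : DC u a) (hv : DC v b) : DC (fun k => u k + v k) (a + b) := by
  obtain ⟨⟨A, c, hA, hc, h1⟩, h2⟩ := hu
  obtain ⟨⟨B, d, hB, hd, h3⟩, h4⟩ := hv
  refine ⟨⟨A + B, max c d, by positivity, by positivity, fun k α => ?_⟩, fun α => ?_⟩
  · have h5 := ((h1 k).mono le_rfl hc hA (le_max_left c d)) α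
    have h6 := ((h3 k).mono le_rfl hd hB (le_max_right c d)) α
    rw [map_add]
    refine (abs_add_le _ _).trans ((add_le_add h5 h6).trans (le_of_eq ?_))
    ring
  · simp only [map_add]
    exact (h2 α).add (h4 α)

/-- A polynomial is of exponential type. -/
theorem EB_of_finite {n : ℕ} (p : MvPolynomial (Fin n) ℝ) :
    ∃ A, 0 ≤ A ∧ EB A 1 (p : MvPowerSeries (Fin n) ℝ) := by
  refine ⟨∑ α ∈ p.support, |coeff α p| * (α.degree.factorial : ℝ), by positivity, fun α => ?_⟩
  rw [MvPolynomial.coeff_coe, one_pow, mul_one, le_div_iff₀ (by positivity)]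
  by_cases h : α ∈ p.support
  · exact Finset.single_le_sum (f := fun α => |coeff α p| * (α.degree.factorial : ℝ))
      (fun i _ => by positivity) h
  · rw [notMem_support_iff.mp h, abs_zero, zero_mul]
    positivity

theorem DC.const {n : ℕ} {a : MvPowerSeries (Fin n) ℝ} {A c : ℝ} (hA : 0 ≤ A) (hc : 0 ≤ c)
    (h : EB A c a) : DC (fun _ => a) a :=
  ⟨⟨A, c, hA, hc, fun _ => h⟩, fun _ => tendsto_const_nhds⟩

theorem DC.const_poly {n : ℕ} (p : MvPolynomial (Fin n) ℝ) :
    DC (fun _ => (p : MvPowerSeries (Fin n) ℝ)) p := by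
  obtain ⟨A, hA, h⟩ := EB_of_finite p
  exact DC.const hA zero_le_one h

theorem DC.one {n : ℕ} : DC (fun _ => (1 : MvPowerSeries (Fin n) ℝ)) 1 := by
  simpa using DC.const_poly (n := n) 1

theorem DC.zero {n : ℕ} : DC (fun _ => (0 : MvPowerSeries (Fin n) ℝ)) 0 := by
  simpa using DC.const_poly (n := n) 0

theorem DC.pow {n : ℕ} {u : ℕ → MvPowerSeries (Fin n) ℝ} {a : MvPowerSeries (Fin n) ℝ}
    (hu : DC u a) (j : ℕ) : DC (fun k => u k ^ j) (a ^ j) := by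
  induction j with
  | zero => simpa using DC.one
  | succ j ih => simpa only [pow_succ] using ih.mul hu

theorem DC.smul {n : ℕ} {u : ℕ → MvPowerSeries (Fin n) ℝ} {a : MvPowerSeries (Fin n) ℝ}
    (hu : DC u a) {t : ℕ → ℝ} {s : ℝ} (ht : Tendsto t atTop (𝓝 s)) :
    DC (fun k => t k • u k) (s • a) := by
  obtain ⟨⟨A, c, hA, hc, h1⟩, h2⟩ := hu
  obtain ⟨T, hT⟩ := ht.abs.bddAbove_range
  have hT' : ∀ k, |t k| ≤ T := fun k => hT ⟨k, rfl⟩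
  have hT0 : 0 ≤ T := (abs_nonneg _).trans (hT' 0)
  refine ⟨⟨T * A, c, by positivity, hc, fun k α => ?_⟩, fun α => ?_⟩
  · rw [map_smul, smul_eq_mul, abs_mul]
    calc _ ≤ T * (A * c ^ α.degree / (α.degree.factorial : ℝ)) := by
          gcongr
          · exact hT' k
          · exact h1 k α
      _ = _ := by ring
  · simp only [map_smul, smul_eq_mul]
    exact ht.mul (h2 α)

theorem DC.sum {n : ℕ} {ι : Type*} (s : Finset ι) {u : ι → ℕ → MvPowerSeries (Fin n) ℝ}
    {a : ι → MvPowerSeries (Fin n) ℝ} (h : ∀ i ∈ s, DC (u i) (a i)) :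
    DC (fun k => ∑ i ∈ s, u i k) (∑ i ∈ s, a i) := by
  classical
  induction s using Finset.induction_on with
  | empty => simpa using DC.zero
  | insert i s hi ih =>
    simp only [Finset.sum_insert hi]
    exact (h i (by simp)).add (ih fun j hj => h j (by simp [hj]))

theorem DC.prod {n : ℕ} {ι : Type*} (s : Finset ι) {u : ι → ℕ → MvPowerSeries (Fin n) ℝ}
    {a : ι → MvPowerSeries (Fin n) ℝ} (h : ∀ i ∈ s, DC (u i) (a i)) :
    DC (fun k => ∏ i ∈ s, u i k) (∏ i ∈ s, a i) := by
  classical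
  induction s using Finset.induction_on with
  | empty => simpa using DC.one
  | insert i s hi ih =>
    simp only [Finset.prod_insert hi]
    exact (h i (by simp)).mul (ih fun j hj => h j (by simp [hj]))

theorem DC.aeval {n m : ℕ} {u : Fin m → ℕ → MvPowerSeries (Fin n) ℝ}
    {a : Fin m → MvPowerSeries (Fin n) ℝ} (h : ∀ i, DC (u i) (a i))
    (p : MvPolynomial (Fin m) ℝ) :
    DC (fun k => MvPolynomial.aeval (fun i => u i k) p) (MvPolynomial.aeval a p) := by
  induction p using MvPolynomial.induction_on with
  | C r =>
    simp only [MvPolynomial.aeval_C, Algebra.algebraMap_eq_smul_one]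
    exact DC.one.smul tendsto_const_nhds
  | add p q hp hq => simpa only [map_add] using hp.add hq
  | mul_X p i hp =>
    simp only [map_mul, MvPolynomial.aeval_X]
    exact hp.mul (h i)

/-- truncations -/
theorem DC.trunc {n : ℕ} {a : MvPowerSeries (Fin n) ℝ} {A c : ℝ} (hA : 0 ≤ A) (hc : 0 ≤ c)
    (h : EB A c a) :
    DC (fun k => ((MvPowerSeries.truncTotal k a : MvPolynomial (Fin n) ℝ) : MvPowerSeries (Fin n) ℝ)) a := by
  refine ⟨⟨A, c, hA, hc, fun k α => ?_⟩, fun α => ?_⟩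
  · rw [MvPolynomial.coeff_coe, MvPowerSeries.coeff_truncTotal_eq_ite]
    split_ifs
    · exact h α
    · rw [abs_zero]; positivity
  · refine tendsto_const_nhds.congr' ?_
    filter_upwards [eventually_gt_atTop α.degree] with k hk
    rw [MvPolynomial.coeff_coe, MvPowerSeries.coeff_truncTotal_eq_ite, if_pos hk]

end LSR

namespace LSR

theorem summable_geom {n : ℕ} : Summable (fun α : Fin n →₀ ℕ => ((1 : ℝ) / 2) ^ α.degree) := by
  classical
  have key : Summable (fun α : Fin n → ℕ => ∏ i, ((1 : ℝ) / 2) ^ α i) := by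
    refine summable_of_sum_le (c := 2 ^ n) (fun α => by positivity) fun s => ?_
    obtain ⟨M, hM⟩ : ∃ M : ℕ, ∀ α ∈ s, ∀ i, α i < M := by
      refine ⟨(s.sup fun α => ∑ i, α i) + 1, fun α hα i => ?_⟩
      have h1 : α i ≤ ∑ i, α i := Finset.single_le_sum (fun _ _ => Nat.zero_le _) (Finset.mem_univ i)
      have h2 := Finset.le_sup (f := fun α : Fin n → ℕ => ∑ i, α i) hα
      exact Nat.lt_succ_of_le (h1.trans h2)
    calc ∑ α ∈ s, ∏ i, ((1 : ℝ) / 2) ^ α i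
        ≤ ∑ α ∈ Fintype.piFinset (fun _ : Fin n => Finset.range M), ∏ i, ((1 : ℝ) / 2) ^ α i := by
          refine Finset.sum_le_sum_of_subset_of_nonneg ?_ (fun _ _ _ => by positivity)
          intro α hα
          simp only [Fintype.mem_piFinset, Finset.mem_range]
          exact hM α hα
      _ = ∏ i : Fin n, ∑ k ∈ Finset.range M, ((1 : ℝ) / 2) ^ k := by
          rw [Finset.prod_univ_sum]
      _ ≤ ∏ i : Fin n, (2 : ℝ) := by
          refine Finset.prod_le_prod (fun _ _ => by positivity) fun i _ => ?_
          have := summable_geometric_two.sum_le_tsum (Finset.range M) (fun _ _ => by positivity)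
          rwa [tsum_geometric_two] at this
      _ = 2 ^ n := by simp
  have h := (Finsupp.equivFunOnFinite : (Fin n →₀ ℕ) ≃ (Fin n → ℕ)).summable_iff.mpr key
  refine h.congr fun α => ?_
  simp [Finsupp.degree_eq_sum, Finset.prod_pow_eq_pow_sum]

theorem exp_sqrt_bound (c : ℝ) (hc : 0 ≤ c) :
    ∃ B : ℝ, 0 ≤ B ∧ ∀ k : ℕ, c ^ k / (k.factorial : ℝ) * Real.sqrt (k.factorial : ℝ) ≤ B * (1 / 2) ^ k := by
  have h0 := (FloorSemiring.tendsto_pow_div_factorial_atTop ((2 * c) ^ 2)).bddAbove_range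
  obtain ⟨B, hB⟩ := h0
  have hB' : ∀ k : ℕ, ((2 * c) ^ 2) ^ k / (k.factorial : ℝ) ≤ B := fun k => hB ⟨k, rfl⟩
  refine ⟨Real.sqrt B, Real.sqrt_nonneg _, fun k => ?_⟩
  have hk : (0 : ℝ) < k.factorial := by exact_mod_cast Nat.factorial_pos k
  have h1 := Real.sqrt_le_sqrt (hB' k)
  have h2 : Real.sqrt (((2 * c) ^ 2) ^ k / (k.factorial : ℝ)) =
      (2 * c) ^ k / Real.sqrt (k.factorial : ℝ) := by
    rw [Real.sqrt_div (by positivity), ← pow_mul, mul_comm 2 k, pow_mul, Real.sqrt_sq (by positivity)]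
  rw [h2] at h1
  have h3 : c ^ k / (k.factorial : ℝ) * Real.sqrt (k.factorial : ℝ)
      = (2 * c) ^ k / Real.sqrt (k.factorial : ℝ) * (1 / 2) ^ k := by
    have hs : Real.sqrt (k.factorial : ℝ) * Real.sqrt (k.factorial : ℝ) = k.factorial :=
      Real.mul_self_sqrt hk.le
    have hs0 : 0 < Real.sqrt (k.factorial : ℝ) := Real.sqrt_pos.mpr hk
    nth_rewrite 1 [← hs]
    rw [mul_pow]
    field_simp
    rw [mul_assoc, ← mul_pow]
    norm_num
  rw [h3]
  gcongr

/-- Growth condition on moment sequences. -/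
def GB {n : ℕ} (y : (Fin n →₀ ℕ) → ℝ) : Prop :=
  ∃ D : ℝ, 0 ≤ D ∧ ∀ α, |y α| ≤ D * Real.sqrt (α.degree.factorial : ℝ)

/-- The functional extended to power series. -/
noncomputable def Lhat {n : ℕ} (y : (Fin n →₀ ℕ) → ℝ) (a : MvPowerSeries (Fin n) ℝ) : ℝ :=
  ∑' α, MvPowerSeries.coeff α a * y α

theorem EB.dom {n : ℕ} {y : (Fin n →₀ ℕ) → ℝ} (hy : GB y) {A c : ℝ} (hA : 0 ≤ A) (hc : 0 ≤ c) :
    ∃ B : ℝ, ∀ a : MvPowerSeries (Fin n) ℝ, EB A c a →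
      ∀ α, ‖MvPowerSeries.coeff α a * y α‖ ≤ B * (1 / 2) ^ α.degree := by
  obtain ⟨D, hD, hy⟩ := hy
  obtain ⟨B, hB, h⟩ := exp_sqrt_bound c hc
  refine ⟨A * D * B, fun a ha α => ?_⟩
  rw [Real.norm_eq_abs, abs_mul]
  calc _ ≤ (A * c ^ α.degree / (α.degree.factorial : ℝ)) *
        (D * Real.sqrt (α.degree.factorial : ℝ)) := by
          gcongr
          · exact ha α
          · exact hy α
    _ = A * D * (c ^ α.degree / (α.degree.factorial : ℝ) * Real.sqrt (α.degree.factorial : ℝ)) := by ring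
    _ ≤ A * D * (B * (1 / 2) ^ α.degree) := mul_le_mul_of_nonneg_left (h _) (by positivity)
    _ = _ := by ring

theorem DC.Lhat {n : ℕ} {y : (Fin n →₀ ℕ) → ℝ} (hy : GB y)
    {u : ℕ → MvPowerSeries (Fin n) ℝ} {a : MvPowerSeries (Fin n) ℝ} (h : DC u a) :
    Tendsto (fun k => Lhat y (u k)) atTop (𝓝 (Lhat y a)) := by
  obtain ⟨⟨A, c, hA, hc, h1⟩, h2⟩ := h
  obtain ⟨B, hB⟩ := EB.dom hy hA hc
  refine tendsto_tsum_of_dominated_convergence (bound := fun α => B * (1 / 2) ^ α.degree)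
    (summable_geom.mul_left B) (fun α => (h2 α).mul_const _) ?_
  exact Eventually.of_forall fun k α => hB _ (h1 k) α

theorem DC.EB {n : ℕ} {u : ℕ → MvPowerSeries (Fin n) ℝ} {a : MvPowerSeries (Fin n) ℝ} (h : DC u a) :
    ∃ A c : ℝ, 0 ≤ A ∧ 0 ≤ c ∧ EB A c a := by
  obtain ⟨⟨A, c, hA, hc, h1⟩, h2⟩ := h
  exact ⟨A, c, hA, hc, fun α => le_of_tendsto (h2 α).abs (Eventually.of_forall fun k => h1 k α)⟩

theorem DC.self {n : ℕ} {u : ℕ → MvPowerSeries (Fin n) ℝ} {a : MvPowerSeries (Fin n) ℝ} (h : DC u a) :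
    DC (fun _ => a) a := by
  obtain ⟨A, c, hA, hc, h1⟩ := h.EB
  exact DC.const hA hc h1

theorem summable_Lhat {n : ℕ} {y : (Fin n →₀ ℕ) → ℝ} (hy : GB y) {a : MvPowerSeries (Fin n) ℝ}
    (h : DC (fun _ => a) a) : Summable (fun α => MvPowerSeries.coeff α a * y α) := by
  obtain ⟨A, c, hA, hc, h1⟩ := h.EB
  obtain ⟨B, hB⟩ := EB.dom hy hA hc
  exact Summable.of_norm_bounded (summable_geom.mul_left B) (hB a h1)

theorem Lhat_poly {n : ℕ} (y : (Fin n →₀ ℕ) → ℝ) (p : MvPolynomial (Fin n) ℝ) :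
    Lhat y (p : MvPowerSeries (Fin n) ℝ) = Ly y p := by
  unfold Lhat Ly
  rw [tsum_eq_sum (s := p.support)]
  · simp
  · intro α hα
    rw [MvPolynomial.coeff_coe, notMem_support_iff.mp hα, zero_mul]

theorem Lhat_sq_nonneg {n : ℕ} {y : (Fin n →₀ ℕ) → ℝ} (hy : GB y)
    (hpos : ∀ q : MvPolynomial (Fin n) ℝ, 0 ≤ Ly y (q ^ 2)) {a : MvPowerSeries (Fin n) ℝ}
    (h : DC (fun _ => a) a) : 0 ≤ Lhat y (a ^ 2) := by
  obtain ⟨A, c, hA, hc, h1⟩ := h.EB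
  refine ge_of_tendsto (((DC.trunc hA hc h1).pow 2).Lhat hy) (Eventually.of_forall fun k => ?_)
  rw [← MvPolynomial.coe_pow, Lhat_poly]
  exact hpos _

theorem Lhat_sum_smul_nonneg {n : ℕ} {y : (Fin n →₀ ℕ) → ℝ} (hy : GB y)
    (hpos : ∀ q : MvPolynomial (Fin n) ℝ, 0 ≤ Ly y (q ^ 2)) {ι : Type*} (s : Finset ι)
    (t : ι → ℝ) (ht : ∀ i ∈ s, 0 ≤ t i) (a : ι → MvPowerSeries (Fin n) ℝ)
    (h : ∀ i ∈ s, DC (fun _ => a i) (a i)) : 0 ≤ Lhat y (∑ i ∈ s, t i • a i ^ 2) := by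
  have : Lhat y (∑ i ∈ s, t i • a i ^ 2) = ∑ i ∈ s, t i * Lhat y (a i ^ 2) := by
    unfold Lhat
    simp only [map_sum, map_smul, smul_eq_mul, Finset.sum_mul]
    rw [Summable.tsum_finsetSum]
    · refine Finset.sum_congr rfl fun i _ => ?_
      rw [← tsum_mul_left]
      simp only [mul_assoc]
    · intro i hi
      simp only [mul_assoc]
      exact (summable_Lhat hy ((h i hi).pow 2)).mul_left _
  rw [this]
  exact Finset.sum_nonneg fun i hi => mul_nonneg (ht i hi) (Lhat_sq_nonneg hy hpos (h i hi))

end LSR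

namespace LSR

theorem ps_sin_sq_add_cos_sq :
    (PowerSeries.sin ℝ) ^ 2 + (PowerSeries.cos ℝ) ^ 2 = 1 := by
  have hs : PowerSeries.derivative ℝ (PowerSeries.sin ℝ) = PowerSeries.cos ℝ := by
    ext k
    rw [PowerSeries.coeff_derivative]
    simp only [PowerSeries.sin, PowerSeries.cos, PowerSeries.coeff_mk]
    by_cases h : Even k
    · have h' : ¬ Even (k + 1) := by rwa [Nat.even_add_one, not_not]
      rw [if_neg h', if_pos h]
      have h2 : (k + 1) / 2 = k / 2 := by obtain ⟨j, rfl⟩ := h; omega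
      rw [h2, Nat.factorial_succ]
      push_cast
      try simp only [eq_ratCast, Rat.cast_div, Rat.cast_mul, Rat.cast_pow, Rat.cast_neg, Rat.cast_one, Rat.cast_add, Rat.cast_natCast]
      have : ((k : ℝ) + 1) ≠ 0 := by positivity
      field_simp
    · have h' : Even (k + 1) := by rwa [Nat.even_add_one]
      rw [if_pos h', if_neg h, zero_mul]
  have hc : PowerSeries.derivative ℝ (PowerSeries.cos ℝ) = - PowerSeries.sin ℝ := by
    ext k
    rw [PowerSeries.coeff_derivative, map_neg]
    simp only [PowerSeries.sin, PowerSeries.cos, PowerSeries.coeff_mk]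
    by_cases h : Even k
    · have h' : ¬ Even (k + 1) := by rwa [Nat.even_add_one, not_not]
      rw [if_neg h', if_pos h]; simp
    · have h' : Even (k + 1) := by rwa [Nat.even_add_one]
      rw [if_pos h', if_neg h]
      have h2 : (k + 1) / 2 = k / 2 + 1 := by
        rw [Nat.not_even_iff_odd] at h
        obtain ⟨j, rfl⟩ := h; omega
      rw [h2, Nat.factorial_succ, pow_succ]
      push_cast
      try simp only [eq_ratCast, Rat.cast_div, Rat.cast_mul, Rat.cast_pow, Rat.cast_neg, Rat.cast_one, Rat.cast_add, Rat.cast_natCast]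
      have : ((k : ℝ) + 1) ≠ 0 := by positivity
      field_simp
  refine PowerSeries.derivative.ext ?_ ?_
  · simp only [map_add, Derivation.leibniz_pow, hs, hc, Derivation.map_one_eq_zero]
    simp
    ring
  · have h1 : PowerSeries.constantCoeff (PowerSeries.sin ℝ) = 0 := by
      have : PowerSeries.coeff 0 (PowerSeries.sin ℝ) = 0 := by
        simp only [PowerSeries.sin, PowerSeries.coeff_mk]; simp
      simpa using this
    have h2 : PowerSeries.constantCoeff (PowerSeries.cos ℝ) = 1 := by
      have : PowerSeries.coeff 0 (PowerSeries.cos ℝ) = 1 := by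
        simp only [PowerSeries.cos, PowerSeries.coeff_mk]; simp
      simpa using this
    rw [map_add, map_pow, map_pow, h1, h2, map_one]; norm_num

/-- `sin (t x_i)` and `cos (t x_i)` as multivariate power series -/
noncomputable def sinX {n : ℕ} (t : ℝ) (i : Fin n) : MvPowerSeries (Fin n) ℝ :=
  PowerSeries.subst (MvPowerSeries.X i) (PowerSeries.rescale t (PowerSeries.sin ℝ))

noncomputable def cosX {n : ℕ} (t : ℝ) (i : Fin n) : MvPowerSeries (Fin n) ℝ :=
  PowerSeries.subst (MvPowerSeries.X i) (PowerSeries.rescale t (PowerSeries.cos ℝ))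

theorem sinX_sq_add_cosX_sq {n : ℕ} (t : ℝ) (i : Fin n) :
    sinX t i ^ 2 + cosX t i ^ 2 = 1 := by
  have hX := PowerSeries.HasSubst.X (S := ℝ) i
  unfold sinX cosX
  rw [← PowerSeries.subst_pow hX, ← PowerSeries.subst_pow hX, ← PowerSeries.subst_add hX,
    ← map_pow, ← map_pow, ← map_add, ps_sin_sq_add_cos_sq, map_one,
    ← PowerSeries.coe_substAlgHom hX, map_one]

theorem abs_coeff_sin (k : ℕ) : |PowerSeries.coeff k (PowerSeries.sin ℝ)| ≤ 1 / (k.factorial : ℝ) := by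
  simp only [PowerSeries.sin, PowerSeries.coeff_mk]
  split_ifs
  · rw [abs_zero]; positivity
  · simp [abs_div]

theorem abs_coeff_cos (k : ℕ) : |PowerSeries.coeff k (PowerSeries.cos ℝ)| ≤ 1 / (k.factorial : ℝ) := by
  simp only [PowerSeries.cos, PowerSeries.coeff_mk]
  split_ifs
  · simp [abs_div]
  · rw [abs_zero]; positivity

theorem EB_subst {n : ℕ} (i : Fin n) (f : PowerSeries ℝ)
    (h : ∀ k, |PowerSeries.coeff k f| ≤ 1 / (k.factorial : ℝ)) :
    EB 1 1 (PowerSeries.subst (MvPowerSeries.X i : MvPowerSeries (Fin n) ℝ) f) := by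
  classical
  intro α
  rw [PowerSeries.coeff_subst_single]
  split_ifs with h1
  · rw [one_pow, mul_one]
    have : α.degree = α i := by rw [h1]; simp
    rw [this]; exact h _
  · rw [abs_zero]; positivity

theorem DC_subst {n : ℕ} (i : Fin n) (f : ℕ → PowerSeries ℝ) (f' : PowerSeries ℝ)
    (h : ∀ m k, |PowerSeries.coeff k (f m)| ≤ 1 / (k.factorial : ℝ))
    (h2 : ∀ k, Tendsto (fun m => PowerSeries.coeff k (f m)) atTop (𝓝 (PowerSeries.coeff k f'))) :
    DC (fun m => PowerSeries.subst (MvPowerSeries.X i : MvPowerSeries (Fin n) ℝ) (f m))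
      (PowerSeries.subst (MvPowerSeries.X i : MvPowerSeries (Fin n) ℝ) f') := by
  classical
  refine ⟨⟨1, 1, zero_le_one, zero_le_one, fun m => EB_subst i _ (h m)⟩, fun α => ?_⟩
  simp only [PowerSeries.coeff_subst_single]
  split_ifs
  · exact h2 _
  · exact tendsto_const_nhds

noncomputable def tt (N : ℕ) : ℝ := 1 / (2 * ((N : ℝ) + 1))

theorem tt_pos (N : ℕ) : 0 < tt N := by unfold tt; positivity
theorem tt_le (N : ℕ) : tt N ≤ 1 := by
  unfold tt; rw [div_le_one (by positivity)]
  have : (0 : ℝ) ≤ N := Nat.cast_nonneg N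
  linarith
theorem tt_tendsto : Tendsto tt atTop (𝓝 0) := by
  have h := (tendsto_one_div_add_atTop_nhds_zero_nat (𝕜 := ℝ)).const_mul (1 / 2)
  rw [mul_zero] at h
  refine h.congr fun N => ?_
  unfold tt; rw [div_mul_div_comm, one_mul]

theorem DC_cosX {n : ℕ} (i : Fin n) : DC (fun N => cosX (tt N) i) 1 := by
  have hX := PowerSeries.HasSubst.X (S := ℝ) i
  have := DC_subst (n := n) i (fun N => PowerSeries.rescale (tt N) (PowerSeries.cos ℝ)) 1 ?_ ?_
  · have h1 : PowerSeries.subst (MvPowerSeries.X i : MvPowerSeries (Fin n) ℝ) (1 : PowerSeries ℝ) = 1 := by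
      rw [← PowerSeries.coe_substAlgHom hX, map_one]
    rw [h1] at this
    exact this
  · intro m k
    rw [PowerSeries.coeff_rescale, abs_mul, abs_of_nonneg (pow_nonneg (tt_pos m).le k)]
    calc _ ≤ 1 * (1 / (k.factorial : ℝ)) := by
          gcongr
          · exact pow_le_one₀ (tt_pos m).le (tt_le m)
          · exact abs_coeff_cos k
      _ = _ := one_mul _
  · intro k
    simp only [PowerSeries.coeff_rescale]
    rcases Nat.eq_zero_or_pos k with rfl | hk
    · simp [PowerSeries.cos]
    · rw [PowerSeries.coeff_one, if_neg hk.ne']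
      have := (tt_tendsto.pow k).mul_const (PowerSeries.coeff k (PowerSeries.cos ℝ))
      rwa [zero_pow hk.ne', zero_mul] at this

theorem DC_sinX {n : ℕ} (i : Fin n) :
    DC (fun N => (1 / tt N) • sinX (tt N) i) (MvPowerSeries.X i) := by
  have hX := PowerSeries.HasSubst.X (S := ℝ) i
  have := DC_subst (n := n) i (fun N => (1 / tt N) • PowerSeries.rescale (tt N) (PowerSeries.sin ℝ))
    PowerSeries.X ?_ ?_
  · rw [PowerSeries.subst_X hX] at this
    simpa only [PowerSeries.subst_smul hX, sinX] using this
  · intro m k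
    rcases k with _ | k
    · simp [PowerSeries.sin]
    rw [map_smul, PowerSeries.coeff_rescale, smul_eq_mul, ← mul_assoc, pow_succ', ← mul_assoc,
      one_div_mul_cancel (tt_pos m).ne', one_mul, abs_mul, abs_of_nonneg (pow_nonneg (tt_pos m).le k)]
    calc _ ≤ 1 * (1 / ((k + 1).factorial : ℝ)) := by
          gcongr
          · exact pow_le_one₀ (tt_pos m).le (tt_le m)
          · exact abs_coeff_sin (k + 1)
      _ = _ := one_mul _
  · intro k
    rcases k with _ | k
    · simp [PowerSeries.sin]
    simp only [map_smul, PowerSeries.coeff_rescale, smul_eq_mul]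
    have h1 : ∀ m, 1 / tt m * (tt m ^ (k + 1) * PowerSeries.coeff (k + 1) (PowerSeries.sin ℝ))
        = tt m ^ k * PowerSeries.coeff (k + 1) (PowerSeries.sin ℝ) := fun m => by
      rw [← mul_assoc, pow_succ', ← mul_assoc, one_div_mul_cancel (tt_pos m).ne', one_mul]
    simp only [h1]
    rcases Nat.eq_zero_or_pos k with rfl | hk
    · simp [PowerSeries.sin, PowerSeries.coeff_X]
    · rw [PowerSeries.coeff_X, if_neg (by omega)]
      have := (tt_tendsto.pow k).mul_const (PowerSeries.coeff (k + 1) (PowerSeries.sin ℝ))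
      rwa [zero_pow hk.ne', zero_mul] at this

theorem DC_sin_self {n : ℕ} (N : ℕ) (i : Fin n) : DC (fun _ => sinX (tt N) i) (sinX (tt N) i) := by
  refine DC_subst i (fun _ => _) _ (fun _ k => ?_) (fun k => tendsto_const_nhds)
  rw [PowerSeries.coeff_rescale, abs_mul, abs_of_nonneg (pow_nonneg (tt_pos N).le k)]
  calc _ ≤ 1 * (1 / (k.factorial : ℝ)) := by
        gcongr
        · exact pow_le_one₀ (tt_pos N).le (tt_le N)
        · exact abs_coeff_sin k
    _ = _ := one_mul _

theorem DC_cos_self {n : ℕ} (N : ℕ) (i : Fin n) : DC (fun _ => cosX (tt N) i) (cosX (tt N) i) := by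
  refine DC_subst i (fun _ => _) _ (fun _ k => ?_) (fun k => tendsto_const_nhds)
  rw [PowerSeries.coeff_rescale, abs_mul, abs_of_nonneg (pow_nonneg (tt_pos N).le k)]
  calc _ ≤ 1 * (1 / (k.factorial : ℝ)) := by
        gcongr
        · exact pow_le_one₀ (tt_pos N).le (tt_le N)
        · exact abs_coeff_cos k
    _ = _ := one_mul _

end LSR

namespace LSR

noncomputable def bern {R : Type*} [CommRing R] [Algebra ℝ R] (p q : R) (m k : ℕ) : R :=
  (m.choose k : ℝ) • (p ^ k * q ^ (m - k))

theorem bern_desc {R : Type*} [CommRing R] [Algebra ℝ R] (p q : R) (hpq : p + q = 1) (m j : ℕ) :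
    ∑ k ∈ Finset.range (m + 1), (k.descFactorial j : ℝ) • bern p q m k =
      (m.descFactorial j : ℝ) • p ^ j := by
  rcases lt_or_ge m j with h | h
  · rw [Nat.descFactorial_of_lt h]
    simp only [Nat.cast_zero, zero_smul]
    refine Finset.sum_eq_zero fun k hk => ?_
    rw [Finset.mem_range] at hk
    rw [Nat.descFactorial_of_lt (by omega), Nat.cast_zero, zero_smul]
  · obtain ⟨l, rfl⟩ := Nat.exists_eq_add_of_le h
    rw [add_assoc, Finset.sum_range_add]
    rw [Finset.sum_eq_zero, zero_add]
    · have hterm : ∀ x ∈ Finset.range (l + 1), ((j + x).descFactorial j : ℝ) • bern p q (j + l) (j + x)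
          = ((j + l).descFactorial j : ℝ) • (p ^ j * (p ^ x * q ^ (l - x) * (l.choose x : R))) := by
        intro x hx
        rw [Finset.mem_range] at hx
        unfold bern
        have h1 : j + l - (j + x) = l - x := by omega
        have h2 : (j + x).descFactorial j * (j + l).choose (j + x) =
            (j + l).descFactorial j * l.choose x := by
          have h3 := Nat.choose_mul (n := j + l) (k := j + x) (s := j) (by omega)
          rw [show j + l - j = l by omega, show j + x - j = x by omega] at h3
          rw [Nat.descFactorial_eq_factorial_mul_choose, Nat.descFactorial_eq_factorial_mul_choose,
            mul_assoc, mul_comm ((j + x).choose j), h3, mul_assoc]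
        have h2' : ((j + x).descFactorial j : ℝ) * ((j + l).choose (j + x) : ℝ) =
            ((j + l).descFactorial j : ℝ) * (l.choose x : ℝ) := by exact_mod_cast h2
        rw [h1, smul_smul, h2', mul_smul]
        congr 1
        rw [Algebra.smul_def, pow_add, map_natCast]
        ring
      rw [Finset.sum_congr rfl hterm, ← Finset.smul_sum, ← Finset.mul_sum, ← add_pow, hpq, one_pow,
        mul_one]
    · intro k hk
      rw [Finset.mem_range] at hk
      rw [Nat.descFactorial_of_lt hk, Nat.cast_zero, zero_smul]

theorem tendsto_desc (j : ℕ) :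
    Tendsto (fun m : ℕ => ((m + 1).descFactorial j : ℝ) / ((m : ℝ) + 1) ^ j) atTop (𝓝 1) := by
  induction j with
  | zero => simp
  | succ j ih =>
    have h1 : Tendsto (fun m : ℕ => 1 - (j : ℝ) * (1 / ((m : ℝ) + 1))) atTop (𝓝 1) := by
      have := (tendsto_one_div_add_atTop_nhds_zero_nat (𝕜 := ℝ)).const_mul (j : ℝ)
      simpa using this.const_sub 1
    have h2 := h1.mul ih
    rw [one_mul] at h2
    refine h2.congr' ?_
    filter_upwards [eventually_ge_atTop j] with m hm
    have hm' : (((m + 1 - j : ℕ)) : ℝ) = (m : ℝ) + 1 - j := by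
      rw [Nat.cast_sub (by omega)]; push_cast; ring
    rw [Nat.descFactorial_succ, Nat.cast_mul, hm', pow_succ]
    have : ((m : ℝ) + 1) ≠ 0 := by positivity
    field_simp

theorem DC_bern {n : ℕ} (p q : MvPowerSeries (Fin n) ℝ) (hpq : p + q = 1) (hp : DC (fun _ => p) p)
    (a : ℕ) : ∀ j : ℕ, DC (fun m => ∑ k ∈ Finset.range (m + 1 + 1),
      ((k : ℝ) ^ a * (k.descFactorial j : ℝ) / ((m : ℝ) + 1) ^ (a + j)) • bern p q (m + 1) k)
      (p ^ (a + j)) := by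
  induction a with
  | zero =>
    intro j
    have h := (hp.pow j).smul (tendsto_desc j)
    rw [one_smul] at h
    simp only [pow_zero, one_mul, zero_add]
    convert h using 2 with m
    have := bern_desc p q hpq (m + 1) j
    rw [div_eq_inv_mul, mul_smul, ← this, Finset.smul_sum]
    refine Finset.sum_congr rfl fun k _ => ?_
    rw [div_eq_inv_mul, mul_smul]
  | succ a ih =>
    intro j
    have h0 : Tendsto (fun m : ℕ => (j : ℝ) * (1 / ((m : ℝ) + 1))) atTop (𝓝 0) := by
      simpa using (tendsto_one_div_add_atTop_nhds_zero_nat (𝕜 := ℝ)).const_mul (j : ℝ)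
    have h := (ih (j + 1)).add ((ih j).smul h0)
    rw [zero_smul, add_zero, show a + (j + 1) = a + 1 + j by ring] at h
    convert h using 2 with m
    rw [Finset.smul_sum, ← Finset.sum_add_distrib]
    refine Finset.sum_congr rfl fun k _ => ?_
    rw [smul_smul, ← add_smul]
    congr 1
    have hk : (k : ℝ) * (k.descFactorial j : ℝ) =
        (k.descFactorial (j + 1) : ℝ) + j * (k.descFactorial j : ℝ) := by
      rcases le_or_gt j k with hjk | hjk
      · rw [Nat.descFactorial_succ, Nat.cast_mul, Nat.cast_sub hjk]; ring
      · rw [Nat.descFactorial_of_lt hjk, Nat.descFactorial_of_lt (by omega)]; simp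
    have hm : ((m : ℝ) + 1) ≠ 0 := by positivity
    rw [pow_succ (k : ℝ) a, mul_assoc, hk, show a + 1 + j = a + j + 1 by ring, pow_succ _ (a + j)]
    field_simp

noncomputable def BB {n : ℕ} (p q : Fin n → MvPowerSeries (Fin n) ℝ) (m : ℕ)
    (h : MvPolynomial (Fin n) ℝ) : MvPowerSeries (Fin n) ℝ :=
  ∑ k ∈ Fintype.piFinset (fun _ : Fin n => Finset.range (m + 1 + 1)),
    (MvPolynomial.eval (fun i => (k i : ℝ) / ((m : ℝ) + 1)) h) • ∏ i, bern (p i) (q i) (m + 1) (k i)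

theorem DC_BB {n : ℕ} (p q : Fin n → MvPowerSeries (Fin n) ℝ) (hpq : ∀ i, p i + q i = 1)
    (hp : ∀ i, DC (fun _ => p i) (p i)) (h : MvPolynomial (Fin n) ℝ) :
    DC (fun m => BB p q m h) (MvPolynomial.aeval p h) := by
  induction h using MvPolynomial.induction_on' with
  | add f g hf hg =>
    have := hf.add hg
    rw [map_add]
    convert this using 2 with m
    simp only [BB, map_add, add_smul, Finset.sum_add_distrib]
  | monomial s c =>
    have h1 := DC.prod Finset.univ (fun i (_ : i ∈ Finset.univ) =>
      DC_bern (p i) (q i) (hpq i) (hp i) (s i) 0)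
    have h2 := h1.smul (tendsto_const_nhds (x := c))
    rw [MvPolynomial.aeval_monomial, Finsupp.prod_fintype _ _ (by simp)]
    simp only [add_zero] at h2
    rw [Algebra.smul_def] at h2
    convert h2 using 2 with m
    rw [Finset.prod_univ_sum, Finset.smul_sum]
    unfold BB
    refine Finset.sum_congr rfl fun k _ => ?_
    rw [MvPolynomial.eval_monomial, Finsupp.prod_fintype _ _ (by simp), mul_smul, Finset.prod_smul]
    congr 2
    refine Finset.prod_congr rfl fun i _ => ?_
    simp [div_pow]

/-- Haviland-type positivity. -/
theorem Ly_nonneg {n : ℕ} {y : (Fin n →₀ ℕ) → ℝ} (hy : GB y)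
    (hpos : ∀ q : MvPolynomial (Fin n) ℝ, 0 ≤ Ly y (q ^ 2)) (h : MvPolynomial (Fin n) ℝ)
    (hh : ∀ x, 0 ≤ eval x h) : 0 ≤ Ly y h := by
  -- the limit in `N`
  have hz : ∀ i : Fin n, DC (fun N => ((1 / tt N) • sinX (tt N) i) * cosX (tt N) i)
      (MvPowerSeries.X i) := fun i => by
    have := (DC_sinX i).mul (DC_cosX i)
    rwa [mul_one] at this
  have hlim := (DC.aeval hz h).Lhat hy
  have hid : MvPolynomial.aeval (fun i : Fin n => (MvPowerSeries.X i : MvPowerSeries (Fin n) ℝ)) h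
      = (h : MvPowerSeries (Fin n) ℝ) := by
    have : MvPolynomial.aeval (fun i : Fin n => (MvPowerSeries.X i : MvPowerSeries (Fin n) ℝ))
        = MvPolynomial.coeToMvPowerSeries.algHom (σ := Fin n) (R := ℝ) ℝ := by
      ext i : 1
      simp
    rw [this]; simp
  rw [hid, Lhat_poly] at hlim
  refine ge_of_tendsto hlim (Eventually.of_forall fun N => ?_)
  set S : Fin n → MvPowerSeries (Fin n) ℝ := fun i => sinX (tt N) i with hS
  set K : Fin n → MvPowerSeries (Fin n) ℝ := fun i => cosX (tt N) i with hK
  have hSd : ∀ i, DC (fun _ => S i) (S i) := fun i => DC_sin_self N i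
  have hKd : ∀ i, DC (fun _ => K i) (K i) := fun i => DC_cos_self N i
  have hP : ∀ i, DC (fun _ => S i + K i) (S i + K i) := fun i => (hSd i).add (hKd i)
  have hQ : ∀ i, DC (fun _ => K i - S i) (K i - S i) := fun i => by
    have := (hKd i).add ((hSd i).smul (tendsto_const_nhds (x := (-1 : ℝ))))
    simpa [sub_eq_add_neg] using this
  set p : Fin n → MvPowerSeries (Fin n) ℝ := fun i => (1 / 2 : ℝ) • (S i + K i) ^ 2 with hp
  set q : Fin n → MvPowerSeries (Fin n) ℝ := fun i => (1 / 2 : ℝ) • (K i - S i) ^ 2 with hq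
  have hpd : ∀ i, DC (fun _ => p i) (p i) := fun i => ((hP i).pow 2).smul tendsto_const_nhds
  have hSK : ∀ i, S i ^ 2 + K i ^ 2 = 1 := fun i => sinX_sq_add_cosX_sq _ i
  have hhalf : (algebraMap ℝ (MvPowerSeries (Fin n) ℝ) (1 / 2)) * 2 = 1 := by
    have : (2 : MvPowerSeries (Fin n) ℝ) = algebraMap ℝ _ 2 := (map_ofNat _ 2).symm
    rw [this, ← map_mul]; norm_num
  have hpq : ∀ i, p i + q i = 1 := fun i => by
    simp only [hp, hq, Algebra.smul_def]
    linear_combination (algebraMap ℝ (MvPowerSeries (Fin n) ℝ) (1 / 2)) * 2 * hSK i + hhalf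
  set T : MvPolynomial (Fin n) ℝ →ₐ[ℝ] MvPolynomial (Fin n) ℝ :=
    MvPolynomial.aeval (fun i => C (1 / (2 * tt N)) * (2 * X i - 1)) with hT
  have hcomp : MvPolynomial.aeval (fun i => ((1 / tt N) • sinX (tt N) i) * cosX (tt N) i) h
      = MvPolynomial.aeval p (T h) := by
    have : MvPolynomial.aeval (fun i => ((1 / tt N) • sinX (tt N) i) * cosX (tt N) i)
        = (MvPolynomial.aeval p).comp T := by
      ext i : 1
      simp only [hT, AlgHom.comp_apply, MvPolynomial.aeval_X, map_mul, map_sub, map_one,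
        MvPolynomial.aeval_C, map_ofNat]
      change ((1 / tt N) • S i) * K i = _
      have h1 : (1 / (2 * tt N)) = (1 / tt N) * (1 / 2) := by
        rw [div_mul_div_comm, one_mul, mul_comm]
      rw [h1, map_mul]
      simp only [hp, Algebra.smul_def]
      set A := algebraMap ℝ (MvPowerSeries (Fin n) ℝ) (1 / tt N)
      set H := algebraMap ℝ (MvPowerSeries (Fin n) ℝ) (1 / 2)
      linear_combination (-A * S i * K i * (2 * H + 1) - A * H) * hhalf
        - 2 * A * H ^ 2 * hSK i
    rw [this]; rfl
  rw [hcomp]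
  refine ge_of_tendsto ((DC_BB p q hpq hpd (T h)).Lhat hy) (Eventually.of_forall fun m => ?_)
  have hBB : BB p q m (T h) = ∑ k ∈ Fintype.piFinset (fun _ : Fin n => Finset.range (m + 1 + 1)),
      ((MvPolynomial.eval (fun i => (k i : ℝ) / ((m : ℝ) + 1)) (T h)) *
        ∏ i, (((m + 1).choose (k i) : ℝ) * ((1 / 2) ^ (k i) * (1 / 2) ^ (m + 1 - k i)))) •
        (∏ i, ((S i + K i) ^ (k i) * (K i - S i) ^ (m + 1 - k i))) ^ 2 := by
    unfold BB
    refine Finset.sum_congr rfl fun k _ => ?_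
    rw [mul_smul, ← Finset.prod_pow, ← Finset.prod_smul]
    congr 1
    refine Finset.prod_congr rfl fun i _ => ?_
    unfold bern
    rw [mul_smul]
    congr 1
    simp only [hp, hq, smul_pow]
    rw [smul_mul_smul_comm]
    congr 1
    rw [mul_pow, ← pow_mul, ← pow_mul, ← pow_mul, ← pow_mul, mul_comm 2, mul_comm 2]
  rw [hBB]
  refine Lhat_sum_smul_nonneg hy hpos _ _ ?_ _ ?_
  · intro k _
    refine mul_nonneg ?_ (by positivity)
    have : eval (fun i => (k i : ℝ) / ((m : ℝ) + 1)) (T h) =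
        eval (fun i => 1 / (2 * tt N) * (2 * ((k i : ℝ) / ((m : ℝ) + 1)) - 1)) h := by
      simp only [hT]
      rw [← MvPolynomial.coe_aeval_eq_eval, ← MvPolynomial.coe_aeval_eq_eval]
      simp only [RingHom.coe_coe]
      rw [← AlgHom.comp_apply, MvPolynomial.comp_aeval]
      congr 2
      ext i
      simp
    rw [this]; exact hh _
  · intro k _
    exact DC.prod _ fun i _ => ((hP i).pow _).mul ((hQ i).pow _)

end LSR

namespace LSR

/-- `Ly` as a linear map -/
noncomputable def LyL {n : ℕ} (y : (Fin n →₀ ℕ) → ℝ) : MvPolynomial (Fin n) ℝ →ₗ[ℝ] ℝ :=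
  (basisMonomials (Fin n) ℝ).constr ℝ y

theorem LyL_monomial {n : ℕ} (y : (Fin n →₀ ℕ) → ℝ) (α : Fin n →₀ ℕ) (c : ℝ) :
    LyL y (monomial α c) = c * y α := by
  have h : monomial α c = c • (basisMonomials (Fin n) ℝ) α := by
    rw [coe_basisMonomials, smul_monomial, smul_eq_mul, mul_one]
  rw [h, map_smul, LyL, Module.Basis.constr_basis, smul_eq_mul]

theorem Ly_eq {n : ℕ} (y : (Fin n →₀ ℕ) → ℝ) (p : MvPolynomial (Fin n) ℝ) : Ly y p = LyL y p := by
  conv_rhs => rw [p.as_sum]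
  rw [map_sum]
  simp only [LyL_monomial]
  rfl

theorem eval_bound {n : ℕ} (f : MvPolynomial (Fin n) ℝ) :
    ∃ F : ℝ, 0 ≤ F ∧ ∀ x : Fin n → ℝ, 1 ≤ ‖x‖ → |eval x f| ≤ F * ‖x‖ ^ f.totalDegree := by
  refine ⟨∑ α ∈ f.support, |coeff α f|, by positivity, fun x hx => ?_⟩
  rw [eval_eq', Finset.sum_mul]
  refine (Finset.abs_sum_le_sum_abs _ _).trans (Finset.sum_le_sum fun α hα => ?_)
  rw [abs_mul]
  gcongr
  rw [Finset.abs_prod]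
  calc ∏ i, |x i ^ α i| ≤ ∏ i, ‖x‖ ^ α i := by
        refine Finset.prod_le_prod (fun _ _ => abs_nonneg _) fun i _ => ?_
        rw [abs_pow]
        gcongr
        exact norm_le_pi_norm x i
    _ = ‖x‖ ^ (∑ i, α i) := by rw [Finset.prod_pow_eq_pow_sum]
    _ ≤ ‖x‖ ^ f.totalDegree := by
        refine pow_le_pow_right₀ hx ?_
        have := le_totalDegree hα
        rwa [Finsupp.sum_fintype _ _ (fun _ => rfl)] at this

theorem coercive {n m : ℕ} (g : Fin m → MvPolynomial (Fin n) ℝ) (f : MvPolynomial (Fin n) ℝ)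
    (fstar : ℝ) (hmin : ∀ x : Fin n → ℝ, (∀ j, eval x (g j) = 0) → fstar ≤ eval x f)
    (δ : ℝ) (hδ : 0 < δ) :
    ∃ M : ℕ, ∀ x : Fin n → ℝ, 0 ≤ eval x f - fstar +
      δ * (1 + ∑ i, x i ^ (2 * (f.totalDegree + 1))) + M * ∑ j, eval x (g j) ^ 2 := by
  obtain ⟨F, hF, hFb⟩ := eval_bound f
  set d := f.totalDegree
  set R : ℝ := max 1 ((F + |fstar|) / δ) with hR
  have hR1 : 1 ≤ R := le_max_left _ _
  have hsum0 : ∀ x : Fin n → ℝ, 0 ≤ ∑ i, x i ^ (2 * (d + 1)) := fun x =>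
    Finset.sum_nonneg fun i _ => by rw [pow_mul]; positivity
  -- far away
  have hfar : ∀ x : Fin n → ℝ, R ≤ ‖x‖ →
      0 ≤ eval x f - fstar + δ * (1 + ∑ i, x i ^ (2 * (d + 1))) := by
    intro x hx
    have hx1 : 1 ≤ ‖x‖ := hR1.trans hx
    obtain ⟨i, hi⟩ : ∃ i, ‖x‖ ≤ ‖x i‖ := by
      by_contra hcon
      push Not at hcon
      exact lt_irrefl _ ((pi_norm_lt_iff (by linarith)).mpr hcon)
    have h1 : ‖x‖ ^ (d + 1) ≤ ∑ i, x i ^ (2 * (d + 1)) := by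
      calc ‖x‖ ^ (d + 1) ≤ ‖x‖ ^ (2 * (d + 1)) := pow_le_pow_right₀ hx1 (by omega)
        _ ≤ ‖x i‖ ^ (2 * (d + 1)) := by gcongr
        _ = x i ^ (2 * (d + 1)) := by rw [Real.norm_eq_abs, pow_mul, sq_abs, ← pow_mul]
        _ ≤ _ := Finset.single_le_sum (f := fun i => x i ^ (2 * (d + 1)))
            (fun i _ => by rw [pow_mul]; positivity) (Finset.mem_univ i)
    have h2 := hFb x hx1
    have h3 : F + |fstar| ≤ δ * ‖x‖ := by
      have : (F + |fstar|) / δ ≤ ‖x‖ := (le_max_right _ _).trans hx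
      rw [div_le_iff₀ hδ] at this
      linarith
    have h4 : 1 ≤ ‖x‖ ^ d := one_le_pow₀ hx1
    have h5 : (F + |fstar|) * ‖x‖ ^ d ≤ δ * ‖x‖ * ‖x‖ ^ d := by gcongr
    have h6 : δ * ‖x‖ ^ (d + 1) ≤ δ * ∑ i, x i ^ (2 * (d + 1)) := by gcongr
    have h7 : |fstar| ≤ |fstar| * ‖x‖ ^ d := le_mul_of_one_le_right (abs_nonneg _) h4
    have h8 := neg_abs_le (eval x f)
    have h9 := le_abs_self fstar
    rw [pow_succ] at h6
    nlinarith
  -- compact part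
  have hcont : ∀ p : MvPolynomial (Fin n) ℝ, Continuous fun x : Fin n → ℝ => eval x p :=
    fun p => MvPolynomial.continuous_eval p
  have hdir := (isCompact_closedBall (0 : Fin n → ℝ) R).elim_directed_cover
    (fun M : ℕ => {x : Fin n → ℝ | 0 < eval x f - fstar + δ + M * ∑ j, eval x (g j) ^ 2}) ?_ ?_ ?_
  · obtain ⟨M, hM⟩ := hdir
    refine ⟨M, fun x => ?_⟩
    have hg0 : 0 ≤ (M : ℝ) * ∑ j, eval x (g j) ^ 2 := by positivity
    rcases le_or_gt R ‖x‖ with h | h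
    · have := hfar x h
      linarith
    · have h1 : x ∈ Metric.closedBall (0 : Fin n → ℝ) R := by simpa using h.le
      have h2 := hM h1
      simp only [Set.mem_setOf_eq] at h2
      have h3 := mul_nonneg hδ.le (hsum0 x)
      nlinarith
  · intro M
    refine isOpen_lt continuous_const ?_
    have h1 := hcont f
    have h2 : Continuous fun x : Fin n → ℝ => ∑ j, eval x (g j) ^ 2 :=
      continuous_finsetSum _ fun j _ => (hcont (g j)).pow 2
    fun_prop
  · intro x _
    simp only [Set.mem_iUnion, Set.mem_setOf_eq]
    by_cases hx : ∀ j, eval x (g j) = 0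
    · refine ⟨0, ?_⟩
      have := hmin x hx
      push_cast
      linarith
    · push Not at hx
      obtain ⟨j, hj⟩ := hx
      have hpos : 0 < ∑ j, eval x (g j) ^ 2 :=
        Finset.sum_pos' (fun _ _ => sq_nonneg _) ⟨j, Finset.mem_univ _, by positivity⟩
      obtain ⟨M, hM⟩ := exists_nat_gt (-(eval x f - fstar + δ) / ∑ j, eval x (g j) ^ 2)
      refine ⟨M, ?_⟩
      rw [div_lt_iff₀ hpos] at hM
      linarith
  · refine directed_of_isDirected_le ?_
    intro M M' hMM x hx
    simp only [Set.mem_setOf_eq] at hx ⊢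
    have : (M : ℝ) ≤ M' := by exact_mod_cast hMM
    have h2 : (M : ℝ) * ∑ j, eval x (g j) ^ 2 ≤ M' * ∑ j, eval x (g j) ^ 2 := by gcongr
    linarith

theorem limit_bound {n m : ℕ} (g : Fin m → MvPolynomial (Fin n) ℝ) (f : MvPolynomial (Fin n) ℝ)
    (fstar : ℝ) (hmin : ∀ x : Fin n → ℝ, (∀ j, eval x (g j) = 0) → fstar ≤ eval x f)
    {y : (Fin n →₀ ℕ) → ℝ} (hy : GB y) (hy1 : LyL y 1 = 1)
    (hpos : ∀ q : MvPolynomial (Fin n) ℝ, 0 ≤ LyL y (q ^ 2)) (hg : ∀ j, LyL y (g j ^ 2) ≤ 0) :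
    fstar ≤ LyL y f := by
  set W := LyL y (1 + ∑ i, X i ^ (2 * (f.totalDegree + 1))) with hW
  have key : ∀ δ : ℝ, 0 < δ → fstar ≤ LyL y f + δ * W := by
    intro δ hδ
    obtain ⟨M, hM⟩ := coercive g f fstar hmin δ hδ
    have h := Ly_nonneg hy (fun q => by rw [Ly_eq]; exact hpos q)
      (f - fstar • 1 + δ • (1 + ∑ i, X i ^ (2 * (f.totalDegree + 1))) + (M : ℝ) • ∑ j, g j ^ 2)
      (fun x => by
        have := hM x
        simpa [smul_eval, mul_add] using this)
    rw [Ly_eq, map_add, map_add, map_sub, map_smul, map_smul, map_smul, hy1, ← hW, map_sum] at h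
    simp only [smul_eq_mul] at h
    have h2 : ∑ j, LyL y (g j ^ 2) ≤ 0 := Finset.sum_nonpos fun j _ => hg j
    have h3 : (M : ℝ) * ∑ j, LyL y (g j ^ 2) ≤ 0 := mul_nonpos_of_nonneg_of_nonpos (by positivity) h2
    linarith
  by_contra hcon
  push Not at hcon
  have hW1 : 0 < |W| + 1 := by positivity
  have h := key ((fstar - LyL y f) / (2 * (|W| + 1))) (div_pos (by linarith) (by positivity))
  have h2 : (fstar - LyL y f) / (2 * (|W| + 1)) * W ≤ (fstar - LyL y f) / 2 := by
    rw [div_mul_eq_mul_div, div_le_div_iff₀ (by positivity) (by norm_num)]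
    have := le_abs_self W
    nlinarith
  linarith

end LSR

namespace LSR

/-- positivity on squares up to level `r` -/
def PSD {n : ℕ} (r : ℕ) (L : MvPolynomial (Fin n) ℝ →ₗ[ℝ] ℝ) : Prop :=
  ∀ q : MvPolynomial (Fin n) ℝ, q.totalDegree ≤ r → 0 ≤ L (q ^ 2)

theorem PSD.cs {n r : ℕ} {L : MvPolynomial (Fin n) ℝ →ₗ[ℝ] ℝ} (hL : PSD r L)
    {p q : MvPolynomial (Fin n) ℝ} (hp : p.totalDegree ≤ r) (hq : q.totalDegree ≤ r) :
    L (p * q) ^ 2 ≤ L (p ^ 2) * L (q ^ 2) := by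
  have key : ∀ t : ℝ, 0 ≤ L (q ^ 2) * (t * t) + (2 * L (p * q)) * t + L (p ^ 2) := by
    intro t
    have h := hL (p + t • q) ((totalDegree_add _ _).trans
      (max_le hp ((totalDegree_smul_le _ _).trans hq)))
    have e : (p + t • q) ^ 2 = (t * t) • q ^ 2 + (2 * t) • (p * q) + p ^ 2 := by
      simp only [smul_eq_C_mul, map_mul, map_ofNat]
      ring
    rw [e, map_add, map_add, map_smul, map_smul, smul_eq_mul, smul_eq_mul] at h
    linarith
  have := discrim_le_zero key
  rw [discrim] at this
  linarith

theorem totalDegree_mo {n : ℕ} (β : Fin n →₀ ℕ) :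
    (monomial β (1 : ℝ)).totalDegree = β.degree := by
  rw [totalDegree_monomial _ one_ne_zero]; rfl

theorem mo_mul {n : ℕ} (β γ : Fin n →₀ ℕ) :
    (monomial β (1 : ℝ)) * monomial γ 1 = monomial (β + γ) 1 := by
  rw [monomial_mul, one_mul]

theorem mo_sq {n : ℕ} (β : Fin n →₀ ℕ) :
    (monomial β (1 : ℝ)) ^ 2 = monomial (β + β) 1 := by
  rw [sq, mo_mul]

theorem PSD.cs_mo {n r : ℕ} {L : MvPolynomial (Fin n) ℝ →ₗ[ℝ] ℝ} (hL : PSD r L)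
    {β γ : Fin n →₀ ℕ} (hp : β.degree ≤ r) (hq : γ.degree ≤ r) :
    L (monomial (β + γ) 1) ^ 2 ≤ L (monomial (β + β) 1) * L (monomial (γ + γ) 1) := by
  have := hL.cs (p := monomial β 1) (q := monomial γ 1)
    (by rwa [totalDegree_mo]) (by rwa [totalDegree_mo])
  rwa [mo_mul, mo_sq, mo_sq] at this

theorem PSD.mo_nonneg {n r : ℕ} {L : MvPolynomial (Fin n) ℝ →ₗ[ℝ] ℝ} (hL : PSD r L)
    {β : Fin n →₀ ℕ} (hp : β.degree ≤ r) : 0 ≤ L (monomial (β + β) 1) := by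
  rw [← mo_sq]; exact hL _ (by rwa [totalDegree_mo])

theorem PSD.max_lemma {n r : ℕ} {L : MvPolynomial (Fin n) ℝ →ₗ[ℝ] ℝ} (hL : PSD r L) (hn : 0 < n)
    (β : Fin n →₀ ℕ) (hβ : β.degree ≤ r) :
    L (monomial (β + β) 1) ≤ ∑ i, L (X i ^ (2 * β.degree)) := by
  classical
  set k := β.degree with hk
  have hfin : {γ : Fin n →₀ ℕ | γ.degree = k}.Finite := Finsupp.finite_of_degree_eq k
  have hX : ∀ i : Fin n, (X i : MvPolynomial (Fin n) ℝ) ^ (2 * k)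
      = monomial (Finsupp.single i k + Finsupp.single i k) 1 := by
    intro i
    rw [← Finsupp.single_add, X_pow_eq_monomial, two_mul]
  have hds : ∀ (i : Fin n) (a : ℕ), (Finsupp.single i a).degree = a := fun i a => by simp
  have hXn : ∀ i : Fin n, 0 ≤ L (X i ^ (2 * k)) := by
    intro i; rw [hX]; exact hL.mo_nonneg (by rw [hds]; exact hβ)
  obtain ⟨δ, hδ, hmax⟩ := hfin.exists_maximalFor
    (fun γ => toLex (L (monomial (γ + γ) 1), ∑ i, γ i ^ 2)) _ ⟨β, hk.symm⟩
  have hδk : δ.degree = k := hδ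
  have hle : ∀ γ : Fin n →₀ ℕ, γ.degree = k →
      L (monomial (γ + γ) 1) ≤ L (monomial (δ + δ) 1) := by
    intro γ hγ
    rcases le_total (toLex (L (monomial (γ + γ) 1), ∑ i, γ i ^ 2))
      (toLex (L (monomial (δ + δ) 1), ∑ i, δ i ^ 2)) with h | h
    · rcases Prod.Lex.toLex_le_toLex.1 h with h | h
      · exact h.le
      · exact h.1.le
    · have h := hmax (show γ ∈ {γ : Fin n →₀ ℕ | γ.degree = k} from hγ) h
      rcases Prod.Lex.toLex_le_toLex.1 h with h | h
      · exact h.le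
      · exact h.1.le
  have hlt : ∀ γ : Fin n →₀ ℕ, γ.degree = k →
      L (monomial (γ + γ) 1) = L (monomial (δ + δ) 1) → ∑ i, γ i ^ 2 ≤ ∑ i, δ i ^ 2 := by
    intro γ hγ he
    by_contra hc
    push Not at hc
    have h := hmax (show γ ∈ {γ : Fin n →₀ ℕ | γ.degree = k} from hγ)
      (Prod.Lex.toLex_le_toLex.2 (Or.inr ⟨he.symm, hc.le⟩))
    rcases Prod.Lex.toLex_le_toLex.1 h with h | h
    · exact absurd he h.ne
    · exact absurd h.2 (not_le.2 hc)
  refine (hle β rfl).trans ?_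
  have h0 : 0 ≤ L (monomial (δ + δ) 1) := hL.mo_nonneg (hδk.trans_le hβ)
  by_cases hM : L (monomial (δ + δ) 1) = 0
  · rw [hM]; exact Finset.sum_nonneg fun i _ => hXn i
  have hM' : 0 < L (monomial (δ + δ) 1) := lt_of_le_of_ne h0 (Ne.symm hM)
  -- claim: δ is pure
  have hpure : ∀ i j : Fin n, i ≠ j → δ j ≤ δ i → δ j = 0 := by
    intro i j hij hji
    by_contra hj
    obtain ⟨γ, hγ⟩ : ∃ γ : Fin n →₀ ℕ, δ = γ + Finsupp.single i 1 + Finsupp.single j 1 := by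
      refine ⟨δ - (Finsupp.single i 1 + Finsupp.single j 1), ?_⟩
      rw [add_assoc, tsub_add_cancel_of_le]
      intro l
      simp only [Finsupp.add_apply, Finsupp.single_apply]
      split_ifs with h1 h2 h2 <;> subst_vars <;> first | omega | exact absurd rfl hij
    set b1 := γ + Finsupp.single i 1 + Finsupp.single i 1 with hb1
    set b2 := γ + Finsupp.single j 1 + Finsupp.single j 1 with hb2
    have hd : δ.degree = γ.degree + 1 + 1 := by rw [hγ]; simp
    have hd1 : b1.degree = k := by rw [← hδk, hd, hb1]; simp
    have hd2 : b2.degree = k := by rw [← hδk, hd, hb2]; simp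
    have hsum : b1 + b2 = δ + δ := by rw [hγ, hb1, hb2]; abel
    have hcs := hL.cs_mo (hd1.trans_le hβ) (hd2.trans_le hβ)
    rw [hsum] at hcs
    have n1 := hL.mo_nonneg (hd1.trans_le hβ)
    have l1 := hle b1 hd1
    have l2 := hle b2 hd2
    have e1 : L (monomial (b1 + b1) 1) = L (monomial (δ + δ) 1) := by
      refine le_antisymm l1 ?_
      have : L (monomial (δ + δ) 1) * L (monomial (δ + δ) 1)
          ≤ L (monomial (b1 + b1) 1) * L (monomial (δ + δ) 1) := by
        rw [← sq]; exact hcs.trans (mul_le_mul_of_nonneg_left l2 n1)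
      exact le_of_mul_le_mul_right this hM'
    have hs := hlt b1 hd1 e1
    have hi1 : b1 i = γ i + 2 := by simp [hb1]
    have hi0 : δ i = γ i + 1 := by rw [hγ]; simp [hij]
    have hj1 : b1 j = γ j := by simp [hb1, hij]
    have hj0 : δ j = γ j + 1 := by rw [hγ]; simp [hij]
    have hother : ∀ l, l ∉ ({i, j} : Finset (Fin n)) → b1 l = δ l := by
      intro l hl
      simp only [Finset.mem_insert, Finset.mem_singleton, not_or] at hl
      rw [hb1, hγ]
      simp [Finsupp.single_apply, Ne.symm hl.1, Ne.symm hl.2]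
    have hS : ∀ h : Fin n → ℕ, ∑ l, h l = (h i + h j) + ∑ l ∈ ({i, j} : Finset (Fin n))ᶜ, h l := by
      intro h
      rw [← Finset.sum_add_sum_compl {i, j}, Finset.sum_pair hij]
    rw [hS, hS (fun l => δ l ^ 2)] at hs
    have : ∑ l ∈ ({i, j} : Finset (Fin n))ᶜ, b1 l ^ 2 = ∑ l ∈ ({i, j} : Finset (Fin n))ᶜ, δ l ^ 2 :=
      Finset.sum_congr rfl fun l hl => by rw [hother l (Finset.mem_compl.1 hl)]
    rw [this] at hs
    rw [hi1, hi0, hj1, hj0] at hs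
    rw [hi0, hj0] at hji
    nlinarith
  obtain ⟨i, -, hi⟩ := Finset.exists_max_image (Finset.univ : Finset (Fin n)) (fun i => δ i)
    ⟨⟨0, hn⟩, Finset.mem_univ _⟩
  have hδs : δ = Finsupp.single i k := by
    have : δ = Finsupp.single i (δ i) := by
      ext j
      by_cases hj : i = j
      · subst hj; simp
      · rw [Finsupp.single_apply, if_neg hj]; exact hpure i j hj (hi j (Finset.mem_univ _))
    have h2 : δ i = k := by rw [← hδk]; conv_rhs => rw [this]
                            rw [hds]
    rw [h2] at this; exact this
  rw [hδs, ← hX]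
  exact Finset.single_le_sum (f := fun i => L (X i ^ (2 * k))) (fun i _ => hXn i) (Finset.mem_univ i)

theorem L_theta {n : ℕ} (L : MvPolynomial (Fin n) ℝ →ₗ[ℝ] ℝ) (r : ℕ) :
    L (theta n r) = ∑ k ∈ Finset.range (r + 1), (1 / (k.factorial : ℝ)) * ∑ i, L (X i ^ (2 * k)) := by
  simp only [theta, map_sum, ← smul_eq_C_mul, map_smul, smul_eq_mul, Finset.mul_sum]

theorem PSD.X_nonneg {n r : ℕ} {L : MvPolynomial (Fin n) ℝ →ₗ[ℝ] ℝ} (hL : PSD r L)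
    (i : Fin n) {k : ℕ} (hk : k ≤ r) : 0 ≤ L (X i ^ (2 * k)) := by
  rw [mul_comm, pow_mul]
  refine hL _ ?_
  rw [totalDegree_X_pow]; exact hk

theorem PSD.theta_ge {n r : ℕ} {L : MvPolynomial (Fin n) ℝ →ₗ[ℝ] ℝ} (hL : PSD r L)
    {k : ℕ} (hk : k ≤ r) :
    (1 / (k.factorial : ℝ)) * ∑ i, L (X i ^ (2 * k)) ≤ L (theta n r) := by
  rw [L_theta]
  refine Finset.single_le_sum (f := fun k => (1 / (k.factorial : ℝ)) * ∑ i, L (X i ^ (2 * k)))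
    (fun k hk => ?_) (Finset.mem_range.2 (Nat.lt_succ_of_le hk))
  have : k ≤ r := by have := Finset.mem_range.1 hk; omega
  exact mul_nonneg (by positivity) (Finset.sum_nonneg fun i _ => hL.X_nonneg i this)

theorem PSD.even_bound {n r : ℕ} {L : MvPolynomial (Fin n) ℝ →ₗ[ℝ] ℝ} (hL : PSD r L) (hn : 0 < n)
    (β : Fin n →₀ ℕ) (hβ : β.degree ≤ r) :
    L (monomial (β + β) 1) ≤ β.degree.factorial * L (theta n r) := by
  refine (hL.max_lemma hn β hβ).trans ?_
  have := hL.theta_ge hβ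
  have hp : (0 : ℝ) < β.degree.factorial := by positivity
  rw [one_div, inv_mul_le_iff₀ hp] at this
  exact this

theorem PSD.bound {n r : ℕ} {L : MvPolynomial (Fin n) ℝ →ₗ[ℝ] ℝ} (hL : PSD r L) (hn : 0 < n)
    (α : Fin n →₀ ℕ) (hα : α.degree ≤ r) :
    L (monomial α 1) ^ 2 ≤ L 1 * (α.degree.factorial * L (theta n r)) := by
  have h := hL.cs (p := 1) (q := monomial α 1) (by simp) (by rwa [totalDegree_mo])
  rw [one_mul, one_pow, mo_sq] at h
  refine h.trans (mul_le_mul_of_nonneg_left (hL.even_bound hn α hα) ?_)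
  have := hL 1 (by simp)
  rwa [one_pow] at this

end LSR

namespace LSR

theorem PSD.f_bound {n r : ℕ} {L : MvPolynomial (Fin n) ℝ →ₗ[ℝ] ℝ} (hL : PSD r L) (hn : 0 < n)
    (f : MvPolynomial (Fin n) ℝ) (hf : f.totalDegree ≤ r) :
    |L f| ≤ (∑ α ∈ f.support, |coeff α f| * Real.sqrt (α.degree.factorial : ℝ)) *
      Real.sqrt (L 1 * L (theta n r)) := by
  conv_lhs => rw [f.as_sum]
  rw [map_sum, Finset.sum_mul]
  refine (Finset.abs_sum_le_sum_abs _ _).trans (Finset.sum_le_sum fun α hα => ?_)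
  have hd : α.degree ≤ r := by
    have := le_totalDegree hα
    exact le_trans this hf
  have e : monomial α (coeff α f) = coeff α f • monomial α (1 : ℝ) := by
    rw [smul_monomial, smul_eq_mul, mul_one]
  rw [e, map_smul, smul_eq_mul, abs_mul, mul_assoc]
  refine mul_le_mul_of_nonneg_left ?_ (abs_nonneg _)
  rw [← Real.sqrt_mul (by positivity)]
  refine Real.abs_le_sqrt ?_
  refine (hL.bound hn α hd).trans_eq (by ring)

theorem no_bad {n m : ℕ} (hn : 0 < n) (g : Fin m → MvPolynomial (Fin n) ℝ)
    (f : MvPolynomial (Fin n) ℝ) (fstar : ℝ)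
    (hmin : ∀ x : Fin n → ℝ, (∀ j, eval x (g j) = 0) → fstar ≤ eval x f)
    (ε : ℝ) (hε : 0 < ε) :
    ∃ r₀ : ℕ, ∀ r : ℕ, r₀ ≤ r → ∀ L : MvPolynomial (Fin n) ℝ →ₗ[ℝ] ℝ, PSD r L → L 1 = 1 →
      (∀ j, L (g j ^ 2) ≤ 0) → fstar < L (f + C ε * theta n r) := by
  by_contra hcon
  push Not at hcon
  choose R0 hR0 L0 hP0 h10 hg0 hf0 using hcon
  -- shift the sequence
  set R : ℕ → ℕ := fun k => R0 (k + f.totalDegree) with hR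
  set L : ℕ → (MvPolynomial (Fin n) ℝ →ₗ[ℝ] ℝ) := fun k => L0 (k + f.totalDegree) with hLdef
  have hRk : ∀ k, k + f.totalDegree ≤ R k := fun k => hR0 _
  have hP : ∀ k, PSD (R k) (L k) := fun k => hP0 _
  have h1 : ∀ k, L k 1 = 1 := fun k => h10 _
  have hg : ∀ k j, L k (g j ^ 2) ≤ 0 := fun k => hg0 _
  have hf : ∀ k, L k f + ε * L k (theta n (R k)) ≤ fstar := by
    intro k
    have := hf0 (k + f.totalDegree)
    rwa [map_add, ← smul_eq_C_mul, map_smul, smul_eq_mul] at this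
  set B : ℝ := ∑ α ∈ f.support, |coeff α f| * Real.sqrt (α.degree.factorial : ℝ) with hB
  have hTn : ∀ k, (n : ℝ) ≤ L k (theta n (R k)) := by
    intro k
    have := (hP k).theta_ge (k := 0) (Nat.zero_le _)
    simpa [h1 k] using this
  set Cc : ℝ := (fstar + B ^ 2 / (2 * ε)) * 2 / ε with hCc
  have hT : ∀ k, L k (theta n (R k)) ≤ Cc := by
    intro k
    have h := (hP k).f_bound hn f (by have := hRk k; omega)
    rw [h1 k, one_mul, ← hB] at h
    have hT0 : 0 ≤ L k (theta n (R k)) := le_trans (by positivity) (hTn k)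
    set T := L k (theta n (R k)) with hTdef
    have hs : Real.sqrt T ^ 2 = T := Real.sq_sqrt hT0
    set s := Real.sqrt T with hs'
    have h2 := (abs_le.1 h).1
    have h3 := hf k
    rw [← hTdef] at h3
    have h4 : B * s ≤ ε * T / 2 + B ^ 2 / (2 * ε) := by
      have : ε * T / 2 + B ^ 2 / (2 * ε) - B * s = (ε * s - B) ^ 2 / (2 * ε) := by
        rw [← hs]; field_simp; ring
      have h5 : 0 ≤ (ε * s - B) ^ 2 / (2 * ε) := by positivity
      linarith
    rw [hCc, le_div_iff₀ hε]
    linarith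
  have hC0 : 0 ≤ Cc := le_trans (by positivity) ((hTn 0).trans (hT 0))
  have hbd : ∀ (α : Fin n →₀ ℕ) (k : ℕ), α.degree ≤ k →
      |L k (monomial α 1)| ≤ Real.sqrt Cc * Real.sqrt (α.degree.factorial : ℝ) := by
    intro α k hk
    rw [← Real.sqrt_mul hC0]
    refine Real.abs_le_sqrt ?_
    refine ((hP k).bound hn α (by have := hRk k; omega)).trans ?_
    rw [h1 k, one_mul, mul_comm]
    exact mul_le_mul_of_nonneg_right (hT k) (by positivity)
  have hlim : ∀ α : Fin n →₀ ℕ, ∃ v : ℝ, |v| ≤ Real.sqrt Cc * Real.sqrt (α.degree.factorial : ℝ) ∧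
      Tendsto (fun k => L k (monomial α 1)) (hyperfilter ℕ) (𝓝 v) := by
    intro α
    have hc : IsCompact (Set.Icc (-(Real.sqrt Cc * Real.sqrt (α.degree.factorial : ℝ)))
      (Real.sqrt Cc * Real.sqrt (α.degree.factorial : ℝ))) := isCompact_Icc
    obtain ⟨v, hv, hle⟩ := hc.ultrafilter_le_nhds
      ((hyperfilter ℕ).map (fun k => L k (monomial α 1))) (by
        rw [le_principal_iff]
        show _ ∈ ((hyperfilter ℕ).map (fun k => L k (monomial α 1)))
        rw [Ultrafilter.mem_map]
        refine Nat.hyperfilter_le_atTop ?_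
        filter_upwards [eventually_ge_atTop α.degree] with k hk
        exact abs_le.1 (hbd α k hk))
    exact ⟨v, abs_le.2 hv, hle⟩
  choose y hyb hyt using hlim
  have hconv : ∀ p, Tendsto (fun k => L k p) (hyperfilter ℕ) (𝓝 (LyL y p)) := by
    intro p
    rw [p.as_sum]
    simp only [map_sum]
    refine tendsto_finsetSum _ fun α _ => ?_
    have e : monomial α (coeff α p) = coeff α p • monomial α (1 : ℝ) := by
      rw [smul_monomial, smul_eq_mul, mul_one]
    rw [LyL_monomial]
    simp only [e, map_smul, smul_eq_mul]
    exact (hyt α).const_mul _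
  have hev : ∀ N : ℕ, ∀ᶠ k in (hyperfilter ℕ : Filter ℕ), N ≤ k := fun N =>
    Nat.hyperfilter_le_atTop (eventually_ge_atTop N)
  have hfin := limit_bound g f fstar hmin (y := y) ⟨Real.sqrt Cc, Real.sqrt_nonneg _, hyb⟩
    (tendsto_nhds_unique (hconv 1) (by simp only [h1]; exact tendsto_const_nhds))
    (fun q => ge_of_tendsto (hconv (q ^ 2)) (by
      filter_upwards [hev q.totalDegree] with k hk
      exact hP k q (by have := hRk k; omega)))
    (fun j => le_of_tendsto (hconv _) (Eventually.of_forall fun k => hg k j))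
  have hlast : LyL y f ≤ fstar - ε * n := by
    refine le_of_tendsto (hconv f) (Eventually.of_forall fun k => ?_)
    have h := mul_le_mul_of_nonneg_left (hTn k) hε.le
    have := hf k
    linarith
  have : 0 < ε * n := by positivity
  linarith

end LSR

namespace LSR

theorem mem_degLE {n r : ℕ} (β : Fin n →₀ ℕ) : β ∈ degLE n r ↔ β.degree ≤ r := by
  have e : (β.sum fun _ e => e) = β.degree := rfl
  rw [degLE, Finset.mem_filter, e, and_iff_right_iff_imp]
  intro h
  rw [Finset.mem_Iic]
  intro i
  exact (Finsupp.le_degree i β).trans h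

theorem totalDegree_theta (n r : ℕ) : (theta n r).totalDegree ≤ 2 * r := by
  rw [theta]
  refine totalDegree_finsetSum_le fun k hk => totalDegree_finsetSum_le fun i _ => ?_
  refine (totalDegree_mul _ _).trans ?_
  rw [totalDegree_C, totalDegree_X_pow]
  have := Finset.mem_range.1 hk
  omega

/-- sums of squares of polynomials of degree at most `r` -/
def SOSr {n : ℕ} (r : ℕ) (p : MvPolynomial (Fin n) ℝ) : Prop :=
  ∃ (k : ℕ) (q : Fin k → MvPolynomial (Fin n) ℝ), (∀ i, (q i).totalDegree ≤ r) ∧ p = ∑ i, q i ^ 2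

theorem SOSr.zero {n r : ℕ} : SOSr r (0 : MvPolynomial (Fin n) ℝ) :=
  ⟨0, fun _ => 0, fun _ => by simp, by simp⟩

theorem SOSr.sq {n r : ℕ} {p : MvPolynomial (Fin n) ℝ} (h : p.totalDegree ≤ r) : SOSr r (p ^ 2) :=
  ⟨1, fun _ => p, fun _ => h, by simp⟩

theorem SOSr.add {n r : ℕ} {p q : MvPolynomial (Fin n) ℝ} (hp : SOSr r p) (hq : SOSr r q) :
    SOSr r (p + q) := by
  obtain ⟨k, a, ha, rfl⟩ := hp
  obtain ⟨l, b, hb, rfl⟩ := hq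
  refine ⟨k + l, Fin.append a b, fun i => ?_, ?_⟩
  · refine Fin.addCases (fun i => ?_) (fun i => ?_) i
    · rw [Fin.append_left]; exact ha i
    · rw [Fin.append_right]; exact hb i
  · rw [Fin.sum_univ_add]; simp

theorem SOSr.smul {n r : ℕ} {p : MvPolynomial (Fin n) ℝ} (hp : SOSr r p) {c : ℝ} (hc : 0 ≤ c) :
    SOSr r (c • p) := by
  obtain ⟨k, a, ha, rfl⟩ := hp
  refine ⟨k, fun i => Real.sqrt c • a i, fun i => (totalDegree_smul_le _ _).trans (ha i), ?_⟩
  rw [Finset.smul_sum]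
  refine Finset.sum_congr rfl fun i _ => ?_
  rw [smul_pow, Real.sq_sqrt hc]

theorem SOSr.sum {n r : ℕ} {ι : Type*} (s : Finset ι) (p : ι → MvPolynomial (Fin n) ℝ)
    (h : ∀ i ∈ s, SOSr r (p i)) : SOSr r (∑ i ∈ s, p i) :=
  Finset.sum_induction p (SOSr r) (fun _ _ => SOSr.add) SOSr.zero h

theorem SOSr.totalDegree {n r : ℕ} {p : MvPolynomial (Fin n) ℝ} (h : SOSr r p) :
    p.totalDegree ≤ 2 * r := by
  obtain ⟨k, a, ha, rfl⟩ := h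
  refine totalDegree_finsetSum_le fun i _ => (totalDegree_pow _ _).trans ?_
  exact Nat.mul_le_mul_left 2 (ha i)

theorem SOSr.isSOS {n r : ℕ} {p : MvPolynomial (Fin n) ℝ} (h : SOSr r p) : IsSOS p := by
  obtain ⟨k, a, ha, rfl⟩ := h
  exact ⟨k, a, rfl⟩

/-- the order unit -/
noncomputable def uu (n r : ℕ) : MvPolynomial (Fin n) ℝ :=
  ∑ β ∈ degLE n r, monomial (β + β) 1

theorem SOSr.mo {n r : ℕ} {β : Fin n →₀ ℕ} (h : β.degree ≤ r) :
    SOSr r (monomial (β + β) (1 : ℝ)) := by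
  rw [← mo_sq]; exact SOSr.sq (by rwa [totalDegree_mo])

theorem SOSr.uu {n r : ℕ} : SOSr r (uu n r) :=
  SOSr.sum _ _ fun β hβ => SOSr.mo ((mem_degLE β).1 hβ)

theorem SOSr.uu_sub {n r : ℕ} {β : Fin n →₀ ℕ} (h : β.degree ≤ r) :
    SOSr r (LSR.uu n r - monomial (β + β) (1 : ℝ)) := by
  classical
  rw [LSR.uu, ← Finset.add_sum_erase _ _ ((mem_degLE β).2 h), add_sub_cancel_left]
  exact SOSr.sum _ _ fun γ hγ => SOSr.mo ((mem_degLE γ).1 (Finset.mem_of_mem_erase hγ))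

/-- polynomials without low-degree terms -/
def HH {n : ℕ} (r : ℕ) (h : MvPolynomial (Fin n) ℝ) : Prop :=
  ∀ α : Fin n →₀ ℕ, α.degree ≤ 2 * r → coeff α h = 0

theorem HH.eq_zero {n r : ℕ} {h : MvPolynomial (Fin n) ℝ} (hh : HH r h)
    (hd : h.totalDegree ≤ 2 * r) : h = 0 := by
  ext α
  rw [coeff_zero]
  by_cases hα : α.degree ≤ 2 * r
  · exact hh α hα
  · refine coeff_eq_zero_of_totalDegree_lt ?_
    have e : ∑ i ∈ α.support, α i = α.degree := rfl
    rw [e]; omega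

theorem order_unit_mono {n r : ℕ} (α : Fin n →₀ ℕ) (c : ℝ) (hα : α.degree ≤ 2 * r) :
    SOSr r (|c| • uu n r + monomial α c) := by
  obtain ⟨β, γ, hβ, hγ, rfl⟩ : ∃ β γ : Fin n →₀ ℕ, β.degree ≤ r ∧ γ.degree ≤ r ∧ α = β + γ := by
    by_cases h : α.degree ≤ r
    · exact ⟨α, 0, h, by simp, by simp⟩
    · obtain ⟨β, hβ, hβd⟩ := Finsupp.exists_le_degree_eq α r (by omega)
      refine ⟨β, α - β, hβd.le, ?_, (add_tsub_cancel_of_le hβ).symm⟩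
      have : β + (α - β) = α := add_tsub_cancel_of_le hβ
      have h2 := congrArg Finsupp.degree this
      rw [map_add] at h2
      omega
  obtain ⟨s, hs⟩ : ∃ s : ℝ, s * s = 1 ∧ c = |c| * s := by
    rcases le_total 0 c with h | h
    · exact ⟨1, by norm_num, by rw [abs_of_nonneg h, mul_one]⟩
    · exact ⟨-1, by norm_num, by rw [abs_of_nonpos h]; ring⟩
  have e : |c| • uu n r + monomial (β + γ) c = (|c| / 2) • ((uu n r - monomial (β + β) 1) +
      (uu n r - monomial (γ + γ) 1) + (monomial β 1 + s • monomial γ 1) ^ 2) := by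
    have h1 : monomial (β + γ) c = (|c| * s) • (monomial β (1 : ℝ) * monomial γ 1) := by
      rw [← hs.2, mo_mul, smul_monomial, smul_eq_mul, mul_one]
    have h2 : (monomial β (1 : ℝ) + s • monomial γ 1) ^ 2
        = monomial β (1 : ℝ) ^ 2 + (2 * s) • (monomial β (1 : ℝ) * monomial γ 1)
          + (s * s) • monomial γ (1 : ℝ) ^ 2 := by
      simp only [smul_eq_C_mul, map_mul, map_ofNat]; ring
    rw [h1, h2, hs.1, mo_sq, mo_sq]
    module
  rw [e]
  refine SOSr.smul (((SOSr.uu_sub hβ).add (SOSr.uu_sub hγ)).add (SOSr.sq ?_)) (by positivity)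
  refine (totalDegree_add _ _).trans (max_le ?_ ((totalDegree_smul_le _ _).trans ?_))
  · rwa [totalDegree_mo]
  · rwa [totalDegree_mo]

theorem order_unit {n r : ℕ} (p : MvPolynomial (Fin n) ℝ) :
    ∃ (t : ℝ) (k h : MvPolynomial (Fin n) ℝ), 0 ≤ t ∧ SOSr r k ∧ HH r h ∧ t • uu n r + p = k + h := by
  classical
  induction p using MvPolynomial.induction_on' with
  | monomial α c =>
    by_cases hα : α.degree ≤ 2 * r
    · exact ⟨|c|, _, 0, abs_nonneg _, order_unit_mono α c hα, fun _ _ => coeff_zero _, (add_zero _).symm⟩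
    · refine ⟨0, 0, monomial α c, le_rfl, SOSr.zero, fun β hβ => ?_, by simp⟩
      rw [coeff_monomial, if_neg]
      rintro rfl
      exact hα hβ
  | add p q hp hq =>
    obtain ⟨t, k, h, ht, hk, hh, e⟩ := hp
    obtain ⟨t', k', h', ht', hk', hh', e'⟩ := hq
    refine ⟨t + t', k + k', h + h', add_nonneg ht ht', hk.add hk', fun α hα => ?_, ?_⟩
    · rw [coeff_add, hh α hα, hh' α hα, add_zero]
    · calc (t + t') • uu n r + (p + q) = (t • uu n r + p) + (t' • uu n r + q) := by module
        _ = _ := by rw [e, e']; abel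

/-- the dual cone generated by squares and `-g_j^2` -/
def InK {n m : ℕ} (r : ℕ) (g : Fin m → MvPolynomial (Fin n) ℝ) (p : MvPolynomial (Fin n) ℝ) : Prop :=
  ∃ (q : MvPolynomial (Fin n) ℝ) (lam : Fin m → ℝ), SOSr r q ∧ (∀ j, 0 ≤ lam j) ∧
    p = q - ∑ j, C (lam j) * g j ^ 2

theorem InK.of_sos {n m r : ℕ} {g : Fin m → MvPolynomial (Fin n) ℝ} {p : MvPolynomial (Fin n) ℝ}
    (h : SOSr r p) : InK r g p := ⟨p, 0, h, fun _ => le_rfl, by simp⟩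

theorem InK.neg_g {n m r : ℕ} {g : Fin m → MvPolynomial (Fin n) ℝ} (j : Fin m) :
    InK r g (-(g j ^ 2)) := by
  classical
  refine ⟨0, Pi.single j 1, SOSr.zero, fun i => ?_, ?_⟩
  · by_cases h : i = j
    · subst h; simp
    · simp [h]
  · rw [Finset.sum_eq_single j]
    · simp
    · intro i _ hi; simp [hi]
    · simp

theorem InK.add {n m r : ℕ} {g : Fin m → MvPolynomial (Fin n) ℝ} {p p' : MvPolynomial (Fin n) ℝ}
    (h : InK r g p) (h' : InK r g p') : InK r g (p + p') := by
  obtain ⟨q, l, hq, hl, rfl⟩ := h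
  obtain ⟨q', l', hq', hl', rfl⟩ := h'
  refine ⟨q + q', l + l', hq.add hq', fun j => add_nonneg (hl j) (hl' j), ?_⟩
  simp only [Pi.add_apply, map_add, add_mul, Finset.sum_add_distrib]
  abel

theorem InK.smul {n m r : ℕ} {g : Fin m → MvPolynomial (Fin n) ℝ} {p : MvPolynomial (Fin n) ℝ}
    (h : InK r g p) {c : ℝ} (hc : 0 ≤ c) : InK r g (c • p) := by
  obtain ⟨q, l, hq, hl, rfl⟩ := h
  refine ⟨c • q, c • l, hq.smul hc, fun j => mul_nonneg hc (hl j), ?_⟩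
  rw [smul_sub, Finset.smul_sum]
  simp only [Pi.smul_apply, smul_eq_C_mul, smul_eq_mul, map_mul, mul_assoc]

theorem InK.totalDegree {n m r : ℕ} {g : Fin m → MvPolynomial (Fin n) ℝ} {p : MvPolynomial (Fin n) ℝ}
    (hg : ∀ j, (g j ^ 2).totalDegree ≤ 2 * r)
    (h : InK r g p) : p.totalDegree ≤ 2 * r := by
  obtain ⟨q, l, hq, hl, rfl⟩ := h
  refine (totalDegree_sub _ _).trans (max_le hq.totalDegree ?_)
  refine totalDegree_finsetSum_le fun j _ => ?_
  rw [← smul_eq_C_mul]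
  exact (totalDegree_smul_le _ _).trans (hg j)

/-- the separating cone -/
noncomputable def coneS {n m : ℕ} (r : ℕ) (g : Fin m → MvPolynomial (Fin n) ℝ)
    (p0 : MvPolynomial (Fin n) ℝ) : PointedCone ℝ (MvPolynomial (Fin n) ℝ) where
  carrier := {p | ∃ (k h : MvPolynomial (Fin n) ℝ) (t : ℝ), InK r g k ∧ HH r h ∧ 0 ≤ t ∧
    p = k - t • p0 + h}
  add_mem' := by
    rintro p p' ⟨k, h, t, hk, hh, ht, rfl⟩ ⟨k', h', t', hk', hh', ht', rfl⟩
    refine ⟨k + k', h + h', t + t', hk.add hk', fun α hα => ?_, add_nonneg ht ht', by module⟩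
    rw [coeff_add, hh α hα, hh' α hα, add_zero]
  zero_mem' := ⟨0, 0, 0, InK.of_sos SOSr.zero, fun _ _ => coeff_zero _, le_rfl, by simp⟩
  smul_mem' := by
    rintro ⟨c, hc⟩ p ⟨k, h, t, hk, hh, ht, rfl⟩
    refine ⟨c • k, c • h, c * t, hk.smul hc, fun α hα => ?_, mul_nonneg hc ht, ?_⟩
    · rw [coeff_smul, hh α hα, smul_zero]
    · show c • (k - t • p0 + h) = _
      module

theorem mem_coneS {n m : ℕ} {r : ℕ} {g : Fin m → MvPolynomial (Fin n) ℝ}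
    {p0 p : MvPolynomial (Fin n) ℝ} : p ∈ coneS r g p0 ↔
    ∃ (k h : MvPolynomial (Fin n) ℝ) (t : ℝ), InK r g k ∧ HH r h ∧ 0 ≤ t ∧
    p = k - t • p0 + h := Iff.rfl

theorem separation {n m r : ℕ} (g : Fin m → MvPolynomial (Fin n) ℝ)
    (hg : ∀ j, (g j ^ 2).totalDegree ≤ 2 * r)
    (p0 : MvPolynomial (Fin n) ℝ) (hp0 : p0.totalDegree ≤ 2 * r) (hnot : ¬ InK r g p0) :
    ∃ L : MvPolynomial (Fin n) ℝ →ₗ[ℝ] ℝ, L (uu n r) = 1 ∧ PSD r L ∧ (∀ j, L (g j ^ 2) ≤ 0) ∧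
      L p0 ≤ 0 := by
  classical
  have hu : uu n r ≠ 0 := by
    intro h0
    obtain ⟨t, k, h, ht, hk, hh, e⟩ := order_unit (r := r) p0
    rw [h0, smul_zero, zero_add] at e
    have : h = 0 := hh.eq_zero (by
      have : h = p0 - k := by rw [e]; abel
      rw [this]
      exact (totalDegree_sub _ _).trans (max_le hp0 hk.totalDegree))
    rw [this, add_zero] at e
    exact hnot (e ▸ InK.of_sos hk)
  obtain ⟨L, hL1, hL2⟩ := riesz_extension (coneS r g p0)
    (LinearPMap.mkSpanSingleton (uu n r) (1 : ℝ) hu) (by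
      rintro ⟨x, hx⟩ hxs
      obtain ⟨t, rfl⟩ := Submodule.mem_span_singleton.1 hx
      rw [LinearPMap.mkSpanSingleton'_apply, RingHom.id_apply, smul_eq_mul, mul_one]
      by_contra ht
      push Not at ht
      obtain ⟨k, h, s, hk, hh, hs, e⟩ := mem_coneS.1 hxs
      change t • uu n r = _ at e
      have h0 : h = 0 := hh.eq_zero (by
        have : h = t • uu n r - (k - s • p0) := by rw [e]; abel
        rw [this]
        refine (totalDegree_sub _ _).trans (max_le ((totalDegree_smul_le _ _).trans
          SOSr.uu.totalDegree) ((totalDegree_sub _ _).trans (max_le (hk.totalDegree hg)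
          ((totalDegree_smul_le _ _).trans hp0))))
        )
      rw [h0, add_zero] at e
      apply hnot
      rcases hs.eq_or_lt with hs | hs
      · rw [← hs, zero_smul, sub_zero] at e
        obtain ⟨t', k', h', ht', hk', hh', e'⟩ := order_unit (r := r) p0
        have h0' : h' = 0 := hh'.eq_zero (by
          have : h' = t' • uu n r + p0 - k' := by rw [e']; abel
          rw [this]
          refine (totalDegree_sub _ _).trans (max_le ((totalDegree_add _ _).trans (max_le
            ((totalDegree_smul_le _ _).trans SOSr.uu.totalDegree) hp0)) hk'.totalDegree))
        rw [h0', add_zero] at e'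
        have : p0 = k' + (t' / (-t)) • k := by
          rw [← e', ← e, smul_smul]
          have : t' / (-t) * t = -t' := by rw [div_neg, neg_mul, div_mul_cancel₀ _ ht.ne]
          rw [this]; module
        rw [this]
        exact (InK.of_sos hk').add (hk.smul (div_nonneg ht' (by linarith)))
      · have : p0 = s⁻¹ • (k + (-t) • uu n r) := by
          have h2 : k + (-t) • uu n r = s • p0 := by
            rw [neg_smul, e]; abel
          rw [h2, smul_smul, inv_mul_cancel₀ hs.ne', one_smul]
        rw [this]
        exact (hk.add ((InK.of_sos SOSr.uu).smul (by linarith))).smul (by positivity))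
    (by
      intro y
      obtain ⟨t, k, h, ht, hk, hh, e⟩ := order_unit (r := r) y
      refine ⟨⟨t • uu n r, Submodule.mem_span_singleton.2 ⟨t, rfl⟩⟩, ?_⟩
      exact mem_coneS.2 ⟨k, h, 0, InK.of_sos hk, hh, le_rfl, by simpa using e⟩)
  have hKs : ∀ k, InK r g k → 0 ≤ L k := fun k hk =>
    hL2 k (mem_coneS.2 ⟨k, 0, 0, hk, fun _ _ => coeff_zero _, le_rfl, by simp⟩)
  refine ⟨L, ?_, fun q hq => hKs _ (InK.of_sos (SOSr.sq hq)), fun j => ?_, ?_⟩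
  · have := hL1 ⟨uu n r, Submodule.mem_span_singleton_self _⟩
    rw [this]
    have h2 := LinearPMap.mkSpanSingleton_apply ℝ ℝ (σ := RingHom.id ℝ) hu (1 : ℝ)
    exact h2
  · have := hKs _ (InK.neg_g (r := r) (g := g) j)
    rw [map_neg] at this; linarith
  · have := hL2 (-p0) (mem_coneS.2 ⟨0, 0, 1, InK.of_sos SOSr.zero, fun _ _ => coeff_zero _,
      zero_le_one, by simp⟩)
    rw [map_neg] at this; linarith

theorem dual_feasible_pos {n m : ℕ} (hn : 0 < n) (g : Fin m → MvPolynomial (Fin n) ℝ)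
    (f : MvPolynomial (Fin n) ℝ) (fstar : ℝ)
    (hmin : ∀ x : Fin n → ℝ, (∀ j, eval x (g j) = 0) → fstar ≤ eval x f)
    (ε : ℝ) (hε : 0 < ε) :
    ∃ r₀ : ℕ, ∀ r : ℕ, r₀ ≤ r → (∀ j, ((g j) ^ 2).totalDegree ≤ 2 * r) →
      InK r g (f + C ε * theta n r - C fstar) := by
  obtain ⟨r₀, hr₀⟩ := no_bad hn g f fstar hmin ε hε
  refine ⟨r₀ + f.totalDegree, fun r hr hg => ?_⟩
  by_contra hnot
  have hdeg : (f + C ε * theta n r - C fstar).totalDegree ≤ 2 * r := by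
    refine (totalDegree_sub _ _).trans (max_le ((totalDegree_add _ _).trans (max_le (by omega) ?_))
      (by simp))
    rw [← smul_eq_C_mul]
    exact (totalDegree_smul_le _ _).trans (totalDegree_theta n r)
  obtain ⟨L, hLu, hP, hLg, hL0⟩ := separation g hg _ hdeg hnot
  have hC : L (C fstar) = fstar * L 1 := by
    have : (C fstar : MvPolynomial (Fin n) ℝ) = fstar • 1 := by rw [smul_eq_C_mul, mul_one]
    rw [this, map_smul, smul_eq_mul]
  rw [map_sub, hC] at hL0
  have hL1 : 0 ≤ L 1 := by
    have := hP 1 (by simp)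
    rwa [one_pow] at this
  rcases hL1.eq_or_lt with h1 | h1
  · have hf := hP.f_bound hn f (by omega)
    rw [← h1, zero_mul, Real.sqrt_zero, mul_zero] at hf
    have hf0 : L f = 0 := abs_nonpos_iff.1 hf
    rw [map_add, hf0, ← smul_eq_C_mul, map_smul, smul_eq_mul, ← h1] at hL0
    have hθ : L (theta n r) ≤ 0 := by
      by_contra h
      push Not at h
      have := mul_pos hε h
      linarith
    have : L (uu n r) ≤ 0 := by
      rw [uu, map_sum]
      refine Finset.sum_nonpos fun β hβ => (hP.even_bound hn β ((mem_degLE β).1 hβ)).trans ?_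
      exact mul_nonpos_of_nonneg_of_nonpos (by positivity) hθ
    linarith
  · have := hr₀ r (by omega) ((L 1)⁻¹ • L) (fun q hq => mul_nonneg (by positivity) (hP q hq))
      (by simp [h1.ne']) (fun j => mul_nonpos_of_nonneg_of_nonpos (by positivity) (hLg j))
    rw [LinearMap.smul_apply, smul_eq_mul, lt_inv_mul_iff₀ h1] at this
    linarith

theorem dual_feasible {n m : ℕ} (g : Fin m → MvPolynomial (Fin n) ℝ)
    (f : MvPolynomial (Fin n) ℝ) (xstar : Fin n → ℝ) (hxV : ∀ j, eval xstar (g j) = 0) (fstar : ℝ)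
    (hfs : fstar = eval xstar f)
    (hmin : ∀ x : Fin n → ℝ, (∀ j, eval x (g j) = 0) → fstar ≤ eval x f)
    (ε : ℝ) (hε : 0 < ε) :
    ∃ r₀ : ℕ, ∀ r : ℕ, r₀ ≤ r → (∀ j, ((g j) ^ 2).totalDegree ≤ 2 * r) →
      InK r g (f + C ε * theta n r - C fstar) := by
  rcases Nat.eq_zero_or_pos n with rfl | hn
  · refine ⟨0, fun r _ _ => ?_⟩
    have : f + C ε * theta 0 r - C fstar = 0 := by
      refine MvPolynomial.funext fun x => ?_
      have hx : x = xstar := Subsingleton.elim _ _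
      subst hx
      simp [theta, hfs]
    rw [this]
    exact InK.of_sos SOSr.zero
  · exact dual_feasible_pos hn g f fstar hmin ε hε

end LSR

namespace LSR

theorem totalDegree_le_of_coeff {n d : ℕ} (p : MvPolynomial (Fin n) ℝ)
    (h : ∀ α : Fin n →₀ ℕ, d < α.degree → coeff α p = 0) : p.totalDegree ≤ d := by
  rw [totalDegree]
  refine Finset.sup_le fun α hα => ?_
  by_contra hc
  push Not at hc
  exact (mem_support_iff.1 hα) (h α hc)

theorem sos_step {n k d : ℕ} (q : Fin k → MvPolynomial (Fin n) ℝ)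
    (hq : ∀ i, (q i).totalDegree ≤ d + 1) (hs : (∑ i, q i ^ 2).totalDegree < 2 * (d + 1)) (i : Fin k) :
    (q i).totalDegree ≤ d := by
  set h : Fin k → MvPolynomial (Fin n) ℝ := fun i => homogeneousComponent (d + 1) (q i) with hh
  have hl : ∀ i, (q i - h i).totalDegree ≤ d := by
    intro i
    refine totalDegree_le_of_coeff _ fun α hα => ?_
    rw [coeff_sub, hh, coeff_homogeneousComponent]
    split_ifs with hc
    · exact sub_self _
    · rw [sub_zero]
      refine coeff_eq_zero_of_totalDegree_lt ?_
      have e : ∑ i ∈ α.support, α i = α.degree := rfl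
      have := hq i
      rw [e]; omega
  have hhd : ∀ i, (h i).totalDegree ≤ d + 1 := fun i =>
    (homogeneousComponent_isHomogeneous (d + 1) (q i)).totalDegree_le
  have hcomp : ∀ i, homogeneousComponent (2 * (d + 1)) (q i ^ 2) = h i ^ 2 := by
    intro i
    have e : q i ^ 2 = h i ^ 2 + (q i - h i) * (q i + h i) := by ring
    have hhom : (h i ^ 2).IsHomogeneous (2 * (d + 1)) := by
      have := (homogeneousComponent_isHomogeneous (d + 1) (q i)).pow 2
      rwa [mul_comm] at this
    rw [e, map_add, homogeneousComponent_eq_self hhom,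
      homogeneousComponent_eq_zero, add_zero]
    refine (totalDegree_mul _ _).trans_lt ?_
    have h1 := hl i
    have h2 : (q i + h i).totalDegree ≤ d + 1 :=
      (totalDegree_add _ _).trans (max_le (hq i) (hhd i))
    omega
  have hzero : ∑ i, h i ^ 2 = 0 := by
    have := homogeneousComponent_eq_zero (2 * (d + 1)) _ hs
    rw [map_sum] at this
    simpa only [hcomp] using this
  have hi0 : h i = 0 := by
    refine MvPolynomial.funext fun x => ?_
    have := congrArg (eval x) hzero
    rw [map_sum, map_zero] at this
    simp only [map_pow] at this
    have := (Finset.sum_eq_zero_iff_of_nonneg (fun i _ => sq_nonneg _)).1 this i (Finset.mem_univ _)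
    rw [map_zero]
    exact pow_eq_zero_iff two_ne_zero |>.1 this
  have := hl i
  rwa [hi0, sub_zero] at this

theorem sosr_of_isSOS {n r : ℕ} {p : MvPolynomial (Fin n) ℝ} (hp : IsSOS p)
    (hd : p.totalDegree ≤ 2 * r) : SOSr r p := by
  obtain ⟨k, q, rfl⟩ := hp
  refine ⟨k, q, ?_, rfl⟩
  have key : ∀ e : ℕ, (∀ i, (q i).totalDegree ≤ r + e) → ∀ i, (q i).totalDegree ≤ r := by
    intro e
    induction e with
    | zero => exact id
    | succ e ih =>
      intro h
      exact ih fun i => sos_step (d := r + e) q h (by omega) i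
  refine key (∑ i, (q i).totalDegree) fun i => ?_
  have := Finset.single_le_sum (f := fun i => (q i).totalDegree) (fun _ _ => Nat.zero_le _)
    (Finset.mem_univ i)
  exact this.trans (Nat.le_add_left _ _)

theorem psd_of_moment {n r : ℕ} {y : (Fin n →₀ ℕ) → ℝ} (h : (momentMatrix n r y).PosSemidef) :
    PSD r (LyL y) := by
  intro q hq
  have hs : q.support ⊆ degLE n r := fun α hα => (mem_degLE α).2 ((le_totalDegree hα).trans hq)
  have e : q = ∑ α : ↥(degLE n r), monomial α.1 (coeff α.1 q) := by
    rw [Finset.sum_coe_sort (degLE n r) (fun α => monomial α (coeff α q))]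
    conv_lhs => rw [q.as_sum]
    refine Finset.sum_subset hs fun α _ hα => ?_
    rw [notMem_support_iff.1 hα, monomial_zero]
  have h2 := h.dotProduct_mulVec_nonneg (fun α => coeff α.1 q)
  refine h2.trans_eq (Eq.symm ?_)
  conv_lhs => rw [e, sq, Finset.sum_mul_sum]
  simp only [map_sum, monomial_mul, LyL_monomial, dotProduct, Matrix.mulVec, momentMatrix,
    Finset.mul_sum, Pi.star_apply, star_trivial]
  refine Finset.sum_congr rfl fun α _ => Finset.sum_congr rfl fun β _ => by ring

theorem weak_duality {n m r : ℕ} {g : Fin m → MvPolynomial (Fin n) ℝ}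
    {p : MvPolynomial (Fin n) ℝ} {γ : ℝ} (hK : InK r g (p - C γ))
    {L : MvPolynomial (Fin n) ℝ →ₗ[ℝ] ℝ} (hL : PSD r L) (hL1 : L 1 = 1)
    (hg : ∀ j, L (g j ^ 2) ≤ 0) : γ ≤ L p := by
  obtain ⟨q, lam, ⟨k, a, ha, rfl⟩, hlam, e⟩ := hK
  have h := congrArg L e
  have hC : L (C γ) = γ := by
    have : (C γ : MvPolynomial (Fin n) ℝ) = γ • 1 := by rw [smul_eq_C_mul, mul_one]
    rw [this, map_smul, smul_eq_mul, hL1, mul_one]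
  rw [map_sub, hC, map_sub, map_sum, map_sum] at h
  have h1 : 0 ≤ ∑ i, L (a i ^ 2) := Finset.sum_nonneg fun i _ => hL _ (ha i)
  have h2 : ∑ j, L (C (lam j) * g j ^ 2) ≤ 0 := Finset.sum_nonpos fun j _ => by
    rw [← smul_eq_C_mul, map_smul, smul_eq_mul]
    exact mul_nonpos_of_nonneg_of_nonpos (hlam j) (hg j)
  linarith

/-- moments of the Dirac measure -/
noncomputable def dirac {n : ℕ} (x : Fin n → ℝ) : (Fin n →₀ ℕ) → ℝ := fun α => ∏ i, x i ^ α i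

theorem LyL_dirac {n : ℕ} (x : Fin n → ℝ) (p : MvPolynomial (Fin n) ℝ) :
    LyL (dirac x) p = eval x p := by
  rw [← Ly_eq, eval_eq']
  rfl

theorem moment_dirac {n r : ℕ} (x : Fin n → ℝ) : (momentMatrix n r (dirac x)).PosSemidef := by
  have : momentMatrix n r (dirac x) = Matrix.vecMulVec (fun α => dirac x α.1)
      (star (fun α => dirac x α.1)) := by
    ext α β
    simp [momentMatrix, Matrix.vecMulVec_apply, dirac, pow_add, Finset.prod_mul_distrib]
  rw [this]
  exact Matrix.posSemidef_vecMulVec_self_star _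

end LSR

theorem SDP_relaxation_bounds (n m : ℕ) (g : Fin m → MvPolynomial (Fin n) ℝ)
    (f : MvPolynomial (Fin n) ℝ)
    (xstar : Fin n → ℝ) (hxV : ∀ j, eval xstar (g j) = 0)
    (hmin : ∀ x : Fin n → ℝ, (∀ j, eval x (g j) = 0) → eval xstar f ≤ eval x f)
    (fstar : ℝ) (hfstar : fstar = eval xstar f)
    (ε : ℝ) (hε : 0 < ε) :
    ∃ r₀ : ℕ, ∀ r : ℕ, r₀ ≤ r →
      f.totalDegree ≤ 2 * r → (∀ j, ((g j) ^ 2).totalDegree ≤ 2 * r) →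
      fstar ≤ supQdual n m g f ε r ∧
      supQdual n m g f ε r ≤ infQ n m g f ε r ∧
      infQ n m g f ε r ≤ fstar + ε * eval xstar (theta n r) ∧
      fstar + ε * eval xstar (theta n r) ≤ fstar + ε * ∑ i, Real.exp ((xstar i) ^ 2) := by
  obtain ⟨r₀, hr₀⟩ := LSR.dual_feasible g f xstar hxV fstar hfstar
    (fun x hx => hfstar ▸ hmin x hx) ε hε
  refine ⟨r₀, fun r hr hf hg => ?_⟩
  have hK := hr₀ r hr hg
  -- weak duality
  have hweak : ∀ v w, (∃ (γ : ℝ) (lam : Fin m → ℝ) (q : MvPolynomial (Fin n) ℝ),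
      (∀ j, 0 ≤ lam j) ∧ IsSOS q ∧ q.totalDegree ≤ 2 * r ∧
      f + C ε * theta n r - C γ = q - ∑ j, C (lam j) * g j ^ 2 ∧ v = γ) →
      (∃ y : (Fin n →₀ ℕ) → ℝ, y 0 = 1 ∧ (momentMatrix n r y).PosSemidef ∧
        (∀ j, Ly y ((g j) ^ 2) ≤ 0) ∧ w = Ly y (f + C ε * theta n r)) → v ≤ w := by
    rintro v w ⟨γ, lam, q, hlam, hq, hqd, e, rfl⟩ ⟨y, hy0, hyM, hyg, rfl⟩
    rw [LSR.Ly_eq]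
    refine LSR.weak_duality (r := r) (g := g) ⟨q, lam, LSR.sosr_of_isSOS hq hqd, hlam, e⟩
      (LSR.psd_of_moment hyM) ?_ (fun j => by rw [← LSR.Ly_eq]; exact hyg j)
    have : (1 : MvPolynomial (Fin n) ℝ) = monomial 0 1 := rfl
    rw [this, LSR.LyL_monomial, hy0, one_mul]
  have hdual : ∃ (γ : ℝ) (lam : Fin m → ℝ) (q : MvPolynomial (Fin n) ℝ),
      (∀ j, 0 ≤ lam j) ∧ IsSOS q ∧ q.totalDegree ≤ 2 * r ∧
      f + C ε * theta n r - C γ = q - ∑ j, C (lam j) * g j ^ 2 ∧ fstar = γ := by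
    obtain ⟨q, lam, hq, hlam, e⟩ := hK
    exact ⟨fstar, lam, q, hlam, hq.isSOS, hq.totalDegree, e, rfl⟩
  have hprimal : ∃ y : (Fin n →₀ ℕ) → ℝ, y 0 = 1 ∧ (momentMatrix n r y).PosSemidef ∧
        (∀ j, Ly y ((g j) ^ 2) ≤ 0) ∧
        fstar + ε * eval xstar (theta n r) = Ly y (f + C ε * theta n r) := by
    refine ⟨LSR.dirac xstar, by simp [LSR.dirac], LSR.moment_dirac xstar, fun j => ?_, ?_⟩
    · rw [LSR.Ly_eq, LSR.LyL_dirac, map_pow, hxV]; simp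
    · rw [LSR.Ly_eq, LSR.LyL_dirac, map_add, map_mul, eval_C, hfstar]
  refine ⟨?_, ?_, ?_, ?_⟩
  · exact le_csSup ⟨_, fun v hv => hweak v _ hv hprimal⟩ hdual
  · refine csSup_le ⟨_, hdual⟩ fun v hv => le_csInf ⟨_, hprimal⟩ fun w hw => hweak v w hv hw
  · exact csInf_le ⟨_, fun w hw => hweak _ w hdual hw⟩ hprimal
  · have : eval xstar (theta n r) ≤ ∑ i, Real.exp ((xstar i) ^ 2) := by
      simp only [theta, map_sum, map_mul, eval_C, map_pow, eval_X]
      rw [Finset.sum_comm]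
      refine Finset.sum_le_sum fun i _ => ?_
      refine le_trans (le_of_eq ?_) (Real.sum_le_exp_of_nonneg (sq_nonneg (xstar i)) (r + 1))
      refine Finset.sum_congr rfl fun k _ => ?_
      rw [pow_mul, one_div, div_eq_inv_mul]
    have := mul_le_mul_of_nonneg_left this hε.le
    linarith
end

section
/- Let n ≥ 1, r ≥ 1, and let (μ_j)_{j ∈ J} be a sequence of Borel probability measures on ℝ^n such that sup_{j ∈ J} ∫ θ_r dμ_j < ∞. Then there is a subsequence (μ_{j_k}) and a Borel probability measure μ on ℝ^n such that ∫ f dμ_{j_k} → ∫ f dμ for every continuous function f : ℝ^n → ℝ such that f/θ_{r−1} is bounded on ℝ^n. -/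
open MvPolynomial MeasureTheory Filter Topology

lemma theta_eval (n r : ℕ) (x : Fin n → ℝ) : eval x (theta n r) =
    ∑ k ∈ Finset.range (r + 1), ∑ i : Fin n, (x i ^ 2) ^ k / (k.factorial : ℝ) := by
  simp only [theta, map_sum, map_mul, map_pow, eval_C, eval_X]
  refine Finset.sum_congr rfl fun k _ => Finset.sum_congr rfl fun i _ => ?_
  rw [pow_mul]; ring

lemma theta_ge_one (n r : ℕ) (hn : 1 ≤ n) (x : Fin n → ℝ) : 1 ≤ eval x (theta n r) := by
  rw [theta_eval, Finset.sum_range_succ']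
  have h1 : (1:ℝ) ≤ n := by exact_mod_cast hn
  have h2 : 0 ≤ ∑ k ∈ Finset.range r, ∑ i : Fin n, (x i ^ 2) ^ (k+1) / ((k+1).factorial : ℝ) := by
    positivity
  simp
  linarith

lemma theta_ge_sq (n r : ℕ) (hr : 1 ≤ r) (x : Fin n → ℝ) (i : Fin n) :
    x i ^ 2 ≤ eval x (theta n r) := by
  rw [theta_eval]
  calc x i ^ 2 = (x i ^ 2) ^ 1 / (Nat.factorial 1 : ℝ) := by simp
    _ ≤ ∑ i : Fin n, (x i ^ 2) ^ 1 / (Nat.factorial 1 : ℝ) :=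
      Finset.single_le_sum (f := fun i => (x i ^ 2) ^ 1 / (Nat.factorial 1 : ℝ))
        (fun _ _ => by positivity) (Finset.mem_univ i)
    _ ≤ _ := Finset.single_le_sum
        (f := fun k => ∑ i : Fin n, (x i ^ 2) ^ k / (Nat.factorial k : ℝ))
        (fun _ _ => by positivity) (Finset.mem_range.2 (by omega))

lemma term_bound (t L : ℝ) (ht : 0 ≤ t) (hL : 0 < L) (k r : ℕ) (hk : k < r) :
    t ^ k / (k.factorial : ℝ) ≤ (r / L) * (t ^ (k+1) / ((k+1).factorial : ℝ)) + (1 + L) ^ r := by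
  have hf : (1:ℝ) ≤ k.factorial := by exact_mod_cast Nat.factorial_pos k
  rcases le_total L t with h | h
  · have h1 : t ^ k / (k.factorial : ℝ) ≤ (r / L) * (t ^ (k+1) / ((k+1).factorial : ℝ)) := by
      have hk1 : ((k:ℝ)+1) ≤ r := by exact_mod_cast hk
      have : (r / L) * (t ^ (k+1) / ((k+1).factorial : ℝ))
          = (t ^ k / (k.factorial : ℝ)) * ((r / (k+1)) * (t / L)) := by
        rw [Nat.factorial_succ]; push_cast; field_simp; ring
      rw [this]
      refine le_mul_of_one_le_right (by positivity) ?_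
      exact one_le_mul_of_one_le_of_one_le ((one_le_div (by positivity)).2 hk1)
        ((one_le_div hL).2 h)
    have : 0 ≤ (1 + L) ^ r := by positivity
    linarith
  · have h1 : t ^ k / (k.factorial : ℝ) ≤ (1 + L) ^ r := calc
      _ ≤ t ^ k := div_le_self (by positivity) hf
      _ ≤ (1 + L) ^ k := by gcongr; linarith
      _ ≤ (1 + L) ^ r := pow_le_pow_right₀ (by linarith) hk.le
    have : 0 ≤ (r / L) * (t ^ (k+1) / ((k+1).factorial : ℝ)) := by positivity
    linarith

lemma theta_growth (n r : ℕ) (hr : 1 ≤ r) (ε : ℝ) (hε : 0 < ε) :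
    ∃ M : ℝ, 0 ≤ M ∧ ∀ x : Fin n → ℝ,
      eval x (theta n (r - 1)) ≤ ε * eval x (theta n r) + M := by
  have hr' : (0:ℝ) < r := by exact_mod_cast hr
  refine ⟨∑ k ∈ Finset.range r, ∑ i : Fin n, (1 + r / ε) ^ r, by positivity, fun x => ?_⟩
  rw [theta_eval, theta_eval, Nat.sub_add_cancel hr, Finset.sum_range_succ' _ r, mul_add]
  have h0 : 0 ≤ ε * ∑ i : Fin n, (x i ^ 2) ^ 0 / (Nat.factorial 0 : ℝ) := by positivity
  have h1 : ∑ k ∈ Finset.range r, ∑ i : Fin n, (x i ^ 2) ^ k / (k.factorial : ℝ) ≤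
      ε * (∑ k ∈ Finset.range r, ∑ i : Fin n, (x i ^ 2) ^ (k+1) / ((k+1).factorial : ℝ))
      + ∑ k ∈ Finset.range r, ∑ i : Fin n, (1 + r / ε) ^ r := by
    simp only [Finset.mul_sum, ← Finset.sum_add_distrib]
    refine Finset.sum_le_sum fun k hk => Finset.sum_le_sum fun i _ => ?_
    have := term_bound (x i ^ 2) (r / ε) (by positivity) (by positivity) k r (Finset.mem_range.1 hk)
    rwa [div_div_cancel₀ hr'.ne'] at this
  linarith

lemma theta_cont (n r : ℕ) : Continuous (fun x : Fin n → ℝ => eval x (theta n r)) :=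
  MvPolynomial.continuous_eval _

lemma trunc_bound {E : Type*} [MeasurableSpace E] [TopologicalSpace E] [BorelSpace E]
    (ρ : Measure E) [IsProbabilityMeasure ρ] (f T : E → ℝ)
    (hf : Continuous f) (hT : Integrable T ρ) (C₀ N δ : ℝ) (hN : 0 ≤ N) (hδ : 0 ≤ δ)
    (hT0 : ∀ x, 0 ≤ T x) (hTC : ∫ x, T x ∂ρ ≤ C₀) (hb : ∀ x, |f x| ≤ δ * T x + N) :
    |∫ x, f x ∂ρ - ∫ x, max (-N) (min (f x) N) ∂ρ| ≤ δ * C₀ := by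
  have hfi : Integrable f ρ :=
    Integrable.mono' ((hT.const_mul δ).add (integrable_const N)) hf.aestronglyMeasurable
      (Eventually.of_forall hb)
  have hgi : Integrable (fun x => max (-N) (min (f x) N)) ρ := by
    refine Integrable.mono' (integrable_const N)
      (by fun_prop : Continuous fun x => max (-N) (min (f x) N)).aestronglyMeasurable
      (Eventually.of_forall fun x => ?_)
    rw [Real.norm_eq_abs, abs_le]
    exact ⟨le_max_left _ _, max_le (by linarith) (min_le_right _ _)⟩
  rw [← integral_sub hfi hgi]
  calc _ ≤ ∫ x, |f x - max (-N) (min (f x) N)| ∂ρ := abs_integral_le_integral_abs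
    _ ≤ ∫ x, δ * T x ∂ρ := by
      refine integral_mono (hfi.sub hgi).abs (hT.const_mul δ) fun x => ?_
      have h1 := hb x
      have h2 : 0 ≤ δ * T x := mul_nonneg hδ (hT0 x)
      rw [abs_le] at h1
      show |f x - max (-N) (min (f x) N)| ≤ δ * T x
      rw [abs_le]
      rcases le_total (f x) N with h | h <;> rcases le_total (-N) (f x) with h' | h' <;>
        constructor <;> grind
    _ ≤ _ := by rw [integral_const_mul]; gcongr

theorem exists_subseq_weak_convergence (n : ℕ) (hn : 1 ≤ n) (r : ℕ) (hr : 1 ≤ r)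
    (μ : ℕ → Measure (Fin n → ℝ)) (hprob : ∀ j, IsProbabilityMeasure (μ j))
    (hint : ∀ j, Integrable (fun x => eval x (theta n r)) (μ j))
    (C₀ : ℝ) (hC : ∀ j, (∫ x, eval x (theta n r) ∂(μ j)) ≤ C₀) :
    ∃ φ : ℕ → ℕ, StrictMono φ ∧
      ∃ ν : Measure (Fin n → ℝ), IsProbabilityMeasure ν ∧
        ∀ f : (Fin n → ℝ) → ℝ, Continuous f →
          (∃ B : ℝ, ∀ x : Fin n → ℝ, |f x / eval x (theta n (r - 1))| ≤ B) →
          Tendsto (fun k => ∫ x, f x ∂(μ (φ k))) atTop (𝓝 (∫ x, f x ∂ν)) := by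
  have hT0 : ∀ x : Fin n → ℝ, 0 ≤ eval x (theta n r) :=
    fun x => zero_le_one.trans (theta_ge_one n r hn x)
  have hC0 : 0 ≤ C₀ := (integral_nonneg hT0).trans (hC 0)
  let P : ℕ → ProbabilityMeasure (Fin n → ℝ) := fun j => ⟨μ j, hprob j⟩
  -- Lintegral bound
  have hlint : ∀ j, ∫⁻ x, ENNReal.ofReal (eval x (theta n r)) ∂(μ j) ≤ ENNReal.ofReal C₀ := by
    intro j
    rw [← ofReal_integral_eq_lintegral_ofReal (hint j) (Eventually.of_forall hT0)]
    exact ENNReal.ofReal_le_ofReal (hC j)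
  have htight : IsTightMeasureSet
      {((ρ : ProbabilityMeasure (Fin n → ℝ)) : Measure (Fin n → ℝ)) | ρ ∈ Set.range P} := by
    rw [isTightMeasureSet_iff_exists_isCompact_measure_compl_le]
    intro ε hε
    obtain ⟨R, hR0, hR⟩ : ∃ R : ℝ, 0 < R ∧ ENNReal.ofReal (C₀ / R ^ 2) ≤ ε := by
      have h1 : Tendsto (fun R : ℝ => ENNReal.ofReal (C₀ / R ^ 2)) atTop (𝓝 0) := by
        rw [← ENNReal.ofReal_zero]
        exact ENNReal.tendsto_ofReal
          (tendsto_const_nhds.div_atTop (tendsto_pow_atTop (by norm_num)))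
      obtain ⟨R, h⟩ := ((eventually_gt_atTop (0:ℝ)).and (h1.eventually (ge_mem_nhds hε))).exists
      exact ⟨R, h⟩
    refine ⟨Metric.closedBall 0 R, isCompact_closedBall _ _, ?_⟩
    rintro _ ⟨_, ⟨j, rfl⟩, rfl⟩
    refine le_trans ?_ hR
    have hsub : (Metric.closedBall (0 : Fin n → ℝ) R)ᶜ ⊆
        {x | ENNReal.ofReal (R ^ 2) ≤ ENNReal.ofReal (eval x (theta n r))} := by
      intro x hx
      apply ENNReal.ofReal_le_ofReal
      by_contra! hlt
      apply hx
      rw [mem_closedBall_zero_iff, pi_norm_le_iff_of_nonneg hR0.le]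
      intro i
      exact abs_le_of_sq_le_sq ((theta_ge_sq n r hr x i).trans hlt.le) hR0.le
    refine (measure_mono hsub).trans ?_
    have hm := mul_meas_ge_le_lintegral₀ (μ := μ j)
      (f := fun x => ENNReal.ofReal (eval x (theta n r)))
      (theta_cont n r).measurable.ennreal_ofReal.aemeasurable (ENNReal.ofReal (R ^ 2))
    rw [ENNReal.ofReal_div_of_pos (by positivity), ENNReal.le_div_iff_mul_le
      (Or.inl (by simpa using hR0.ne')) (Or.inl ENNReal.ofReal_ne_top), mul_comm]
    exact hm.trans (hlint j)
  obtain ⟨ν, -, φ, hφ, hlim⟩ := (isCompact_closure_of_isTightMeasureSet htight).tendsto_subseq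
    (x := P) (fun j => subset_closure (Set.mem_range_self j))
  refine ⟨φ, hφ, ν, inferInstance, fun f hf ⟨B, hB⟩ => ?_⟩
  have hνl : ∫⁻ x, ENNReal.ofReal (eval x (theta n r)) ∂(ν : Measure (Fin n → ℝ))
      ≤ ENNReal.ofReal C₀ := by
    refine (lintegral_le_liminf_lintegral_of_forall_isOpen_measure_le_liminf_measure
      (μs := fun k => (P (φ k) : Measure (Fin n → ℝ))) (theta_cont n r) hT0
      (fun G hG => ProbabilityMeasure.le_liminf_measure_open_of_tendsto hlim hG)).trans ?_
    refine (liminf_le_liminf (v := fun _ => ENNReal.ofReal C₀)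
      (Eventually.of_forall fun k => hlint (φ k))).trans ?_
    simp
  have hνi : Integrable (fun x => eval x (theta n r)) (ν : Measure (Fin n → ℝ)) :=
    (lintegral_ofReal_ne_top_iff_integrable (theta_cont n r).aestronglyMeasurable
      (Eventually.of_forall hT0)).1 (hνl.trans_lt ENNReal.ofReal_lt_top).ne
  have hνC : ∫ x, eval x (theta n r) ∂(ν : Measure (Fin n → ℝ)) ≤ C₀ := by
    rw [← ofReal_integral_eq_lintegral_ofReal hνi (Eventually.of_forall hT0)] at hνl
    exact (ENNReal.ofReal_le_ofReal_iff hC0).1 hνl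
  have hB0 : 0 ≤ B := (abs_nonneg _).trans (hB 0)
  have hfB : ∀ x, |f x| ≤ B * eval x (theta n (r - 1)) := by
    intro x
    have h1 := theta_ge_one n (r - 1) hn x
    have h2 := hB x
    rwa [abs_div, abs_of_pos (by linarith : 0 < eval x (theta n (r - 1))),
      div_le_iff₀ (by linarith)] at h2
  rw [Metric.tendsto_atTop]
  intro ε hε
  -- choose truncation
  set η : ℝ := ε / (4 * (B + 1) * (C₀ + 1)) with hη
  have hη0 : 0 < η := by positivity
  obtain ⟨M, hM, hgrow⟩ := theta_growth n r hr η hη0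
  have hb : ∀ x, |f x| ≤ (B * η) * eval x (theta n r) + B * M := fun x =>
    (hfB x).trans (by nlinarith [mul_le_mul_of_nonneg_left (hgrow x) hB0])
  have hsmall : (B * η) * C₀ ≤ ε / 4 := by
    calc (B * η) * C₀ ≤ ((B + 1) * η) * (C₀ + 1) := by gcongr <;> linarith
      _ = ε / 4 := by rw [hη]; field_simp
  have hBM : 0 ≤ B * M := by positivity
  let g : BoundedContinuousFunction (Fin n → ℝ) ℝ := BoundedContinuousFunction.ofNormedAddCommGroup
    (fun x => max (-(B * M)) (min (f x) (B * M))) (by fun_prop) (B * M) (fun x => by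
      rw [Real.norm_eq_abs, abs_le]
      exact ⟨le_max_left _ _, max_le (by linarith) (min_le_right _ _)⟩)
  have hg := (ProbabilityMeasure.tendsto_iff_forall_integral_tendsto.1 hlim) g
  obtain ⟨K, hK⟩ := (Metric.tendsto_atTop.1 hg) (ε / 4) (by positivity)
  refine ⟨K, fun k hk => ?_⟩
  have h1 := hK k hk
  have h2 := trunc_bound (μ (φ k)) f _ hf (hint (φ k)) C₀ (B * M) (B * η) hBM (by positivity)
    hT0 (hC (φ k)) hb
  have h3 := trunc_bound (ν : Measure (Fin n → ℝ)) f _ hf hνi C₀ (B * M) (B * η) hBM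
    (by positivity) hT0 hνC hb
  change dist (∫ x, max (-(B * M)) (min (f x) (B * M)) ∂(μ (φ k)))
    (∫ x, max (-(B * M)) (min (f x) (B * M)) ∂(ν : Measure (Fin n → ℝ))) < ε / 4 at h1
  rw [Real.dist_eq] at h1 ⊢
  rw [abs_lt] at h1 ⊢
  rw [abs_le] at h2 h3
  constructor <;> linarith [h1.1, h1.2, h2.1, h2.2, h3.1, h3.2]
end
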